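/- arXiv:1208.2527 — 4 statements merged into one kernel-verified Lean document; each statement's English description precedes it below -/
import Mathlib

section
/- For fractional Brownian motion $B^H$ with Hurst parameter $H \in [1/2,1)$ on $[0,a]$, the expected supremum satisfies $\frac{\sqrt{2}\,a^H}{2\sqrt{\pi}} \le E[\sup_{0\le v\le a} B^H_v] \le \frac{\sqrt{2}\,a^H}{\sqrt{\pi}}$. -/
open MeasureTheory ProbabilityTheory Real Set Filter

/-- A (standard) fractional Brownian motion with Hurst parameter `H`:
a continuous centered Gaussian process started at `0` with the fBm covariance. -/
structure IsFBM {Ω : Type*} [MeasurableSpace Ω] (P : Measure Ω) (H : ℝ)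
    (B : ℝ → Ω → ℝ) : Prop where
  measurable : ∀ t, Measurable (B t)
  gaussian : ∀ (n : ℕ) (t : Fin n → ℝ) (c : Fin n → ℝ),
    ∃ v : NNReal, P.map (fun ω => ∑ i, c i * B (t i) ω) = gaussianReal 0 v
  zero : ∀ ω, B 0 ω = 0
  cov : ∀ s t : ℝ, 0 ≤ s → 0 ≤ t →
    ∫ ω, B s ω * B t ω ∂P = (s ^ (2*H) + t ^ (2*H) - |t - s| ^ (2*H)) / 2
  cont : ∀ ω, Continuous fun t => B t ω

/-- Running supremum `S_a = sup_{0 ≤ v ≤ a} B_v`. -/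
noncomputable def fbmSup {Ω : Type*} (B : ℝ → Ω → ℝ) (a : ℝ) (ω : Ω) : ℝ :=
  sSup ((fun v => B v ω) '' Set.Icc 0 a)

/-- Running infimum `I_a = inf_{0 ≤ v ≤ a} B_v`. -/
noncomputable def fbmInf {Ω : Type*} (B : ℝ → Ω → ℝ) (a : ℝ) (ω : Ω) : ℝ :=
  sInf ((fun v => B v ω) '' Set.Icc 0 a)

/-- Maximum loss `M_a = sup_{0 ≤ u ≤ v ≤ a} (B_u - B_v)`. -/
noncomputable def fbmMaxLoss {Ω : Type*} (B : ℝ → Ω → ℝ) (a : ℝ) (ω : Ω) : ℝ :=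
  sSup {x | ∃ u v : ℝ, 0 ≤ u ∧ u ≤ v ∧ v ≤ a ∧ x = B u ω - B v ω}

set_option linter.unusedSectionVars false
/-- centered Gaussian real variable -/
def CG {Ω : Type*} [MeasurableSpace Ω] (P : Measure Ω) (X : Ω → ℝ) : Prop :=
  Measurable X ∧ ∃ v : NNReal, P.map X = gaussianReal 0 v

section CGfacts
variable {Ω : Type*} [MeasurableSpace Ω] {P : Measure Ω} {X : Ω → ℝ}

lemma CG.memLp (h : CG P X) : MemLp X 2 P := by
  obtain ⟨hm, v, hv⟩ := h
  have := memLp_id_gaussianReal' (μ := 0) (v := v) 2 (by simp)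
  rw [← hv, memLp_map_measure_iff (by fun_prop) hm.aemeasurable] at this
  simpa using this

lemma CG.integrable (h : CG P X) : Integrable X P := by
  obtain ⟨hm, v, hv⟩ := h
  have := memLp_id_gaussianReal' (μ := 0) (v := v) 1 (by simp)
  rw [← hv, memLp_map_measure_iff (by fun_prop) hm.aemeasurable] at this
  simpa using memLp_one_iff_integrable.1 this

lemma CG.integral_eq_zero (h : CG P X) : ∫ ω, X ω ∂P = 0 := by
  obtain ⟨hm, v, hv⟩ := h
  have := integral_map (μ := P) hm.aemeasurable (f := fun x : ℝ => x) (by fun_prop)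
  rw [← this, hv, integral_id_gaussianReal]

lemma integral_sq_gaussianReal (v : NNReal) : ∫ x, x ^ 2 ∂(gaussianReal 0 v) = v := by
  have := variance_fun_id_gaussianReal (μ := 0) (v := v)
  rw [variance_eq_integral measurable_id'.aemeasurable] at this
  simpa using this

lemma CG.sq_eq {v : NNReal} (hm : Measurable X) (hv : P.map X = gaussianReal 0 v) :
    ∫ ω, X ω ^ 2 ∂P = v := by
  have := integral_map (μ := P) hm.aemeasurable (f := fun x : ℝ => x ^ 2) (by fun_prop)
  rw [← this, hv, integral_sq_gaussianReal]

lemma CG.integrable_mul {Y : Ω → ℝ} (h : CG P X) (h' : CG P Y) :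
    Integrable (fun ω => X ω * Y ω) P := h.memLp.integrable_mul h'.memLp

end CGfacts

lemma hasDerivAt_gpdf (v : NNReal) (hv : v ≠ 0) (x : ℝ) :
    HasDerivAt (gaussianPDFReal 0 v) (-(x / v) * gaussianPDFReal 0 v x) x := by
  have hv' : (v : ℝ) ≠ 0 := by exact_mod_cast hv
  rw [gaussianPDFReal_def]
  have h1 : HasDerivAt (fun x : ℝ => -(x - 0) ^ 2 / (2 * (v : ℝ))) (-(x / v)) x := by
    have := ((((hasDerivAt_id x).sub_const 0).pow 2).neg).div_const (2 * (v : ℝ))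
    refine this.congr_deriv ?_
    simp only [Nat.cast_ofNat, id]
    field_simp
    ring
  have := (h1.exp).const_mul ((√(2 * π * v))⁻¹)
  refine this.congr_deriv ?_
  ring

lemma integrable_gaussianReal_iff (v : NNReal) (hv : v ≠ 0) (f : ℝ → ℝ) :
    Integrable f (gaussianReal 0 v) ↔ Integrable (fun x => gaussianPDFReal 0 v x * f x) := by
  rw [gaussianReal_of_var_ne_zero _ hv, integrable_withDensity_iff_integrable_smul₀']
  · simp
  · fun_prop
  · simp [gaussianPDF]

/-- one-dimensional Gaussian integration by parts -/
lemma stein (v : NNReal) (h h' : ℝ → ℝ) (hd : ∀ x, HasDerivAt h (h' x) x)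
    (C : ℝ) (hb : ∀ x, |h x| ≤ C) (hb' : ∀ x, |h' x| ≤ C) (hm : Measurable h') :
    ∫ x, x * h x ∂(gaussianReal 0 v) = v * ∫ x, h' x ∂(gaussianReal 0 v) := by
  by_cases hv : v = 0
  · subst hv; simp
  have hv' : (v : ℝ) ≠ 0 := by exact_mod_cast hv
  have hc : Continuous h := continuous_iff_continuousAt.2 fun x => (hd x).continuousAt
  have i1 : Integrable (fun x => x) (gaussianReal 0 v) :=
    memLp_one_iff_integrable.1 (memLp_id_gaussianReal' (μ := 0) (v := v) 1 (by simp))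
  have i2 : Integrable (fun x => x * h x) (gaussianReal 0 v) :=
    i1.mul_bdd (c := C) hc.aestronglyMeasurable (ae_of_all _ hb)
  have i3 : Integrable h' (gaussianReal 0 v) :=
    Integrable.of_bound hm.aestronglyMeasurable C (ae_of_all _ hb')
  have i4 : Integrable h (gaussianReal 0 v) :=
    Integrable.of_bound hc.aestronglyMeasurable C (ae_of_all _ hb)
  rw [integrable_gaussianReal_iff v hv] at i2 i3 i4
  rw [integral_gaussianReal_eq_integral_smul hv, integral_gaussianReal_eq_integral_smul hv]
  have := integral_mul_deriv_eq_deriv_mul_of_integrable (u := h) (v := gaussianPDFReal 0 v)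
    (u' := h') (v' := fun x => -(x / v) * gaussianPDFReal 0 v x)
    (fun x _ => hd x) (fun x _ => hasDerivAt_gpdf v hv x)
    ((i2.const_mul (-(v : ℝ)⁻¹)).congr (ae_of_all _ fun x => by simp; field_simp))
    (i3.congr (ae_of_all _ fun x => by simp; ring))
    (i4.congr (ae_of_all _ fun x => by simp; ring))
  have e : ∫ x, gaussianPDFReal 0 v x • (x * h x)
      = (-(v : ℝ)) * ∫ x, h x * (-(x / v) * gaussianPDFReal 0 v x) := by
    rw [← integral_const_mul]
    congr 1; ext x; simp; field_simp
  rw [e, this]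
  simp [mul_comm]

lemma integral_abs_gaussianReal (v : NNReal) :
    ∫ x, |x| ∂(gaussianReal 0 v) = √2 * √v / √π := by
  by_cases hv : v = 0
  · subst hv; simp
  have hv' : (0 : ℝ) < v := by positivity
  rw [integral_gaussianReal_eq_integral_smul hv]
  have h1 : ∫ x, gaussianPDFReal 0 v x • |x| = ∫ x, (fun y => gaussianPDFReal 0 v y • y) |x| := by
    congr 1; ext x; simp [gaussianPDFReal]
  rw [h1, integral_comp_abs (f := fun y => gaussianPDFReal 0 v y • y)]
  have h2 := integral_Ioi_of_hasDerivAt_of_nonneg' (a := (0:ℝ)) (l := 0)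
    (g := fun x => -(v : ℝ) * gaussianPDFReal 0 v x) (g' := fun y => gaussianPDFReal 0 v y • y)
    (fun x _ => by
      have := (hasDerivAt_gpdf v hv x).const_mul (-(v : ℝ))
      refine this.congr_deriv ?_
      simp only [smul_eq_mul]; field_simp)
    (fun x hx => mul_nonneg (gaussianPDFReal_nonneg _ _ _) (le_of_lt hx)) (by
      have : Tendsto (fun x : ℝ => gaussianPDFReal 0 v x) atTop (nhds 0) := by
        rw [gaussianPDFReal_def]
        have : Tendsto (fun x : ℝ => rexp (-(x - 0) ^ 2 / (2 * (v : ℝ)))) atTop (nhds 0) := by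
          apply Real.tendsto_exp_atBot.comp
          simp only [sub_zero, neg_div]
          apply tendsto_neg_atTop_atBot.comp
          exact (tendsto_pow_atTop (by norm_num)).atTop_div_const (by positivity)
        simpa using this.const_mul ((√(2 * π * v))⁻¹)
      simpa using this.const_mul (-(v : ℝ)))
  rw [h2]
  simp [gaussianPDFReal]
  have e1 : √(v:ℝ) * √(v:ℝ) = v := Real.mul_self_sqrt hv'.le
  have e2 : √(2:ℝ) * √2 = 2 := Real.mul_self_sqrt (by norm_num)
  have := Real.sqrt_pos.2 hv'
  have := Real.sqrt_pos.2 pi_pos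
  field_simp
  nlinarith

section SM
variable {ι : Type} [Fintype ι] [Nonempty ι]

/-- softmax -/
noncomputable def smx (i : ι) (z : ι → ℝ) : ℝ := rexp (z i) / ∑ j, rexp (z j)

/-- log-sum-exp -/
noncomputable def lse (z : ι → ℝ) : ℝ := Real.log (∑ j, rexp (z j))

lemma sumexp_pos (z : ι → ℝ) : 0 < ∑ j, rexp (z j) :=
  Finset.sum_pos (fun _ _ => exp_pos _) Finset.univ_nonempty

lemma smx_nonneg (i : ι) (z : ι → ℝ) : 0 ≤ smx i z :=
  div_nonneg (exp_pos _).le (sumexp_pos z).le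

lemma smx_sum (z : ι → ℝ) : ∑ i, smx i z = 1 := by
  unfold smx
  rw [← Finset.sum_div, div_self (sumexp_pos z).ne']

lemma smx_le_one (i : ι) (z : ι → ℝ) : smx i z ≤ 1 := by
  rw [← smx_sum z]
  exact Finset.single_le_sum (f := fun i => smx i z) (fun j _ => smx_nonneg j z) (Finset.mem_univ i)

lemma abs_smx_le_one (i : ι) (z : ι → ℝ) : |smx i z| ≤ 1 := by
  rw [abs_of_nonneg (smx_nonneg i z)]; exact smx_le_one i z

lemma continuous_smx (i : ι) : Continuous (smx (ι := ι) i) := by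
  unfold smx
  exact Continuous.div (by fun_prop) (by fun_prop) (fun z => (sumexp_pos z).ne')

lemma continuous_lse : Continuous (lse (ι := ι)) := by
  unfold lse
  exact Continuous.log (by fun_prop) (fun z => (sumexp_pos z).ne')

lemma hasDerivAt_lse (z : ℝ → ι → ℝ) (z' : ι → ℝ) (x : ℝ)
    (h : ∀ i, HasDerivAt (fun t => z t i) (z' i) x) :
    HasDerivAt (fun t => lse (z t)) (∑ i, smx i (z x) * z' i) x := by
  have h1 : HasDerivAt (fun t => ∑ j, rexp (z t j)) (∑ j, rexp (z x j) * z' j) x :=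
    HasDerivAt.fun_sum fun i _ => (h i).exp
  refine (h1.log (sumexp_pos _).ne').congr_deriv ?_
  rw [Finset.sum_div]
  refine Finset.sum_congr rfl fun i _ => ?_
  unfold smx; ring

lemma hasDerivAt_smx (i : ι) (z : ℝ → ι → ℝ) (z' : ι → ℝ) (x : ℝ)
    (h : ∀ i, HasDerivAt (fun t => z t i) (z' i) x) :
    HasDerivAt (fun t => smx i (z t)) (smx i (z x) * (z' i - ∑ j, smx j (z x) * z' j)) x := by
  have h1 : HasDerivAt (fun t => ∑ j, rexp (z t j)) (∑ j, rexp (z x j) * z' j) x :=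
    HasDerivAt.fun_sum fun i _ => (h i).exp
  refine ((h i).exp.fun_div h1 (sumexp_pos _).ne').congr_deriv ?_
  have e : ∑ j, smx j (z x) * z' j = (∑ j, rexp (z x j) * z' j) / ∑ j, rexp (z x j) := by
    rw [Finset.sum_div]
    refine Finset.sum_congr rfl fun i _ => ?_
    unfold smx; ring
  rw [e]
  unfold smx
  have := (sumexp_pos (z x)).ne'
  field_simp

lemma le_lse (i : ι) (z : ι → ℝ) : z i ≤ lse z := by
  unfold lse
  rw [Real.le_log_iff_exp_le (sumexp_pos z)]
  exact Finset.single_le_sum (f := fun i => rexp (z i)) (fun j _ => (exp_pos _).le) (Finset.mem_univ i)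

lemma lse_le (z : ι → ℝ) (m : ℝ) (h : ∀ i, z i ≤ m) : lse z ≤ m + Real.log (Fintype.card ι) := by
  unfold lse
  rw [Real.log_le_iff_le_exp (sumexp_pos z), Real.exp_add, Real.exp_log (by exact_mod_cast Fintype.card_pos)]
  calc ∑ j, rexp (z j) ≤ ∑ j : ι, rexp m := Finset.sum_le_sum fun i _ => exp_le_exp.2 (h i)
    _ = _ := by simp [mul_comm]

lemma abs_smx_comb_le (z c : ι → ℝ) : |∑ j, smx j z * c j| ≤ ∑ j, |c j| := by
  refine (Finset.abs_sum_le_sum_abs _ _).trans (Finset.sum_le_sum fun j _ => ?_)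
  rw [abs_mul]
  exact mul_le_of_le_one_left (abs_nonneg _) (abs_smx_le_one j z)

lemma abs_dsmx_le (i : ι) (z c : ι → ℝ) :
    |smx i z * (c i - ∑ j, smx j z * c j)| ≤ 2 * ∑ j, |c j| := by
  rw [abs_mul]
  refine (mul_le_of_le_one_left (abs_nonneg _) (abs_smx_le_one i z)).trans ?_
  refine (abs_sub _ _).trans ?_
  have := abs_smx_comb_le z c
  have h2 : |c i| ≤ ∑ j, |c j| :=
    Finset.single_le_sum (f := fun i => |c i|) (fun j _ => abs_nonneg _) (Finset.mem_univ i)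
  linarith

end SM

section IBP
variable {ι : Type} [Fintype ι] [Nonempty ι]
variable {Ω : Type*} [MeasurableSpace Ω] {P : Measure Ω} [IsProbabilityMeasure P]

lemma hasGaussianLaw_of_CG {W : ι → Ω → ℝ} {U : Ω → ℝ} (hW : ∀ i, Measurable (W i))
    (hU : Measurable U)
    (hG : ∀ (c : ι → ℝ) (d : ℝ), CG P (fun ω => ∑ i, c i * W i ω + d * U ω)) :
    HasGaussianLaw (fun ω ↦ (fun i ↦ W i ω, fun _ : Unit ↦ U ω)) P := by
  classical
  constructor
  constructor
  intro L
  have hm : Measurable (fun ω ↦ ((fun i ↦ W i ω, fun _ : Unit ↦ U ω) : (ι → ℝ) × (Unit → ℝ))) := by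
    fun_prop
  have hLm : Measurable L := L.continuous.measurable
  rw [Measure.map_map hLm hm, integral_map hm.aemeasurable hLm.aestronglyMeasurable,
    variance_map hLm.aemeasurable hm.aemeasurable]
  set X := (L ∘ fun ω ↦ ((fun i ↦ W i ω, fun _ : Unit ↦ U ω) : (ι → ℝ) × (Unit → ℝ))) with hX
  have e : X = fun ω => ∑ i, L (Pi.single i 1, 0) * W i ω + L (0, fun _ => 1) * U ω := by
    ext ω
    simp only [hX, Function.comp]
    have : ((fun i ↦ W i ω, fun _ : Unit ↦ U ω) : (ι → ℝ) × (Unit → ℝ))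
        = ∑ i, W i ω • ((Pi.single i 1, 0) : (ι → ℝ) × (Unit → ℝ)) + U ω • (0, fun _ => 1) := by
      ext j
      · simp [Prod.fst_sum, Finset.sum_apply, Pi.single_apply]
      · simp [Prod.snd_sum]
    rw [this, map_add, map_sum]
    simp only [map_smul, smul_eq_mul, mul_comm]
  have hc := hG (fun i => L (Pi.single i 1, 0)) (L (0, fun _ => 1))
  rw [← e] at hc
  have h0 := hc.integral_eq_zero
  obtain ⟨hXm, v, hv⟩ := hc
  have h2 := CG.sq_eq hXm hv
  rw [variance_eq_integral hXm.aemeasurable, hv]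
  have h0' : ∫ ω, L ((fun i ↦ W i ω, fun _ : Unit ↦ U ω) : (ι → ℝ) × (Unit → ℝ)) ∂P = 0 := h0
  rw [h0', h0]
  simp [h2]

lemma CG_single {W : ι → Ω → ℝ} {U : Ω → ℝ}
    (hG : ∀ (c : ι → ℝ) (d : ℝ), CG P (fun ω => ∑ i, c i * W i ω + d * U ω)) (i : ι) :
    CG P (W i) := by
  classical
  have := hG (Pi.single i 1) 0
  simpa [Pi.single_apply] using this

lemma CG_right {W : ι → Ω → ℝ} {U : Ω → ℝ}
    (hG : ∀ (c : ι → ℝ) (d : ℝ), CG P (fun ω => ∑ i, c i * W i ω + d * U ω)) :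
    CG P U := by
  have := hG 0 1
  simpa using this

lemma ibp {Z : ι → Ω → ℝ} {U : Ω → ℝ}
    (hG : ∀ (c : ι → ℝ) (d : ℝ), CG P (fun ω => ∑ i, c i * Z i ω + d * U ω)) (i : ι)
    (c : ι → ℝ) (hc : ∀ j, ∫ ω, Z j ω * U ω ∂P = c j) :
    ∫ ω, U ω * smx i (fun j => Z j ω) ∂P =
      ∫ ω, smx i (fun j => Z j ω) * (c i - ∑ j, smx j (fun j => Z j ω) * c j) ∂P := by
  have hZ := CG_single hG
  have hU := CG_right hG
  obtain ⟨hUm, v, hv⟩ := id hU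
  have hU2 := CG.sq_eq hUm hv
  by_cases hv0 : v = 0
  · have hU0 : U =ᵐ[P] 0 := by
      have : ∀ᵐ x ∂(P.map U), x = 0 := by
        rw [hv, hv0, gaussianReal_zero_var]; simp [ae_dirac_eq]
      exact ae_of_ae_map hUm.aemeasurable this
    have hc0 : c = 0 := by
      ext j
      rw [← hc j]
      apply integral_eq_zero_of_ae
      filter_upwards [hU0] with ω hω
      simp [hω]
    rw [hc0]
    simp only [Pi.zero_apply, mul_zero, Finset.sum_const_zero, sub_zero, integral_zero]
    apply integral_eq_zero_of_ae
    filter_upwards [hU0] with ω hω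
    simp [hω]
  have hv' : (v : ℝ) ≠ 0 := by exact_mod_cast hv0
  set k : ι → ℝ := fun j => c j / v with hk
  set W : ι → Ω → ℝ := fun j ω => Z j ω - k j * U ω with hW
  have hWm : ∀ j, Measurable (W j) := fun j => (hZ j).1.sub (hUm.const_mul _)
  have hGW : ∀ (c : ι → ℝ) (d : ℝ), CG P (fun ω => ∑ i, c i * W i ω + d * U ω) := by
    intro a d
    have := hG a (d - ∑ i, a i * k i)
    convert this using 2 with ω
    simp only [hW, mul_sub, Finset.sum_sub_distrib, sub_mul, Finset.sum_mul, mul_assoc]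
    ring
  have hind : IndepFun (fun ω j => W j ω) (fun ω (_ : Unit) => U ω) P := by
    refine HasGaussianLaw.indepFun_of_covariance_eval (Y := fun _ : Unit => U) (hasGaussianLaw_of_CG hWm hUm hGW) ?_
    intro j _
    rw [covariance_eq_sub (CG_single hGW j).memLp hU.memLp, hU.integral_eq_zero]
    simp only [mul_zero, sub_zero, Pi.mul_apply, hW, sub_mul]
    rw [integral_sub ((hZ j).integrable_mul hU), hc]
    · simp only [mul_assoc, ← sq]
      rw [integral_const_mul, hU2, hk]
      field_simp; ring
    · simp only [mul_assoc]
      exact (hU.integrable_mul hU).const_mul _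
  have hind' : IndepFun (fun ω j => W j ω) U P :=
    hind.comp (φ := id) (ψ := fun f : Unit → ℝ => f ()) measurable_id (measurable_pi_apply _)
  have hWm' : Measurable (fun ω j => W j ω) := measurable_pi_lambda _ hWm
  have hprod := (indepFun_iff_map_prod_eq_prod_map_map hWm'.aemeasurable hUm.aemeasurable).1 hind'
  rw [hv] at hprod
  have key : ∀ (F : (ι → ℝ) × ℝ → ℝ), Continuous F → (∃ C, ∀ z, |F z| ≤ C * (1 + |z.2|)) →
      ∫ ω, F (fun j => W j ω, U ω) ∂P =
        ∫ w, ∫ x, F (w, x) ∂(gaussianReal 0 v) ∂(P.map (fun ω j => W j ω)) := by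
    rintro F hF ⟨C, hC⟩
    have := Measure.isProbabilityMeasure_map hWm'.aemeasurable (μ := P)
    rw [← integral_prod, ← hprod, integral_map (by fun_prop) (by fun_prop)]
    have i1 : Integrable (fun x => C * (1 + |x|)) (gaussianReal 0 v) := by
      have : Integrable (fun x : ℝ => x) (gaussianReal 0 v) :=
        memLp_one_iff_integrable.1 (memLp_id_gaussianReal' (μ := 0) (v := v) 1 (by simp))
      exact ((integrable_const 1).add this.abs).const_mul C
    exact (i1.comp_snd (P.map (fun ω j => W j ω))).mono' hF.aestronglyMeasurable (ae_of_all _ hC)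
  have hZW : ∀ ω, (fun j => Z j ω) = fun j => W j ω + U ω * k j := by
    intro ω; ext j; simp [hW]; ring
  simp only [hZW]
  have cs := fun i => continuous_smx (ι := ι) i
  have e1 := key (fun z => z.2 * smx i (fun j => z.1 j + z.2 * k j)) (by
    exact continuous_snd.mul ((cs i).comp (by fun_prop))) ⟨1, fun z => by
      rw [abs_mul]
      have := mul_le_of_le_one_right (abs_nonneg z.2) (abs_smx_le_one i (fun j => z.1 j + z.2 * k j))
      linarith⟩
  have e2 := key (fun z => smx i (fun j => z.1 j + z.2 * k j) *
      (c i - ∑ l, smx l (fun j => z.1 j + z.2 * k j) * c l)) (by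
    have : ∀ l, Continuous fun z : (ι → ℝ) × ℝ => smx l (fun j => z.1 j + z.2 * k j) :=
      fun l => (cs l).comp (by fun_prop)
    fun_prop) ⟨2 * ∑ j, |c j|, fun z => by
      refine (abs_dsmx_le i _ c).trans ?_
      have : 0 ≤ 2 * ∑ j, |c j| := by positivity
      have := abs_nonneg z.2
      nlinarith⟩
  simp only at e1 e2
  rw [e1, e2]
  congr 1; ext w
  have hs := stein v (fun x => smx i (fun j => w j + x * k j))
    (fun x => smx i (fun j => w j + x * k j) * (k i - ∑ l, smx l (fun j => w j + x * k j) * k l))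
    (fun x => hasDerivAt_smx i (fun x j => w j + x * k j) k x (fun j => by
      simpa using ((hasDerivAt_id x).mul_const (k j)).const_add (w j)))
    (1 + 2 * ∑ j, |k j|) (fun x => by
      refine (abs_smx_le_one i _).trans ?_
      have : 0 ≤ 2 * ∑ j, |k j| := by positivity
      linarith) (fun x => (abs_dsmx_le i _ k).trans (by linarith)) (by
        have : ∀ l, Continuous fun x : ℝ => smx l (fun j => w j + x * k j) :=
          fun l => (cs l).comp (by fun_prop)
        apply Continuous.measurable
        fun_prop)
  rw [hs, ← integral_const_mul]
  congr 1; ext x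
  have hck : ∀ l, c l = v * k l := fun l => by simp only [hk]; field_simp
  simp only [hck, mul_left_comm _ (v : ℝ), ← Finset.mul_sum]
  ring

end IBP

section SF
variable {ι : Type} [Fintype ι] [Nonempty ι]
variable {Ω : Type*} [MeasurableSpace Ω] {P : Measure Ω} [IsProbabilityMeasure P]

lemma abs_lse_le (z : ι → ℝ) : |lse z| ≤ ∑ i, |z i| + Real.log (Fintype.card ι) := by
  have hs : ∀ i, |z i| ≤ ∑ i, |z i| := fun i =>
    Finset.single_le_sum (f := fun i => |z i|) (fun j _ => abs_nonneg _) (Finset.mem_univ i)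
  have hn : 0 ≤ Real.log (Fintype.card ι) := Real.log_natCast_nonneg _
  rw [abs_le]
  constructor
  · have i := Classical.arbitrary ι
    have := le_lse i z
    have := neg_abs_le (z i)
    have := hs i
    linarith
  · exact lse_le z _ fun i => (le_abs_self _).trans (hs i)

lemma integrable_lse {Z : ι → Ω → ℝ} (hm : ∀ i, Measurable (Z i)) (hi : ∀ i, Integrable (Z i) P) :
    Integrable (fun ω => lse (fun i => Z i ω)) P := by
  have : Integrable (fun ω => ∑ i, |Z i ω| + Real.log (Fintype.card ι)) P :=
    (integrable_finsetSum _ fun i _ => (hi i).abs).add (integrable_const _)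
  refine this.mono' ?_ (ae_of_all _ fun ω => abs_lse_le _)
  exact (continuous_lse.measurable.comp (measurable_pi_lambda _ hm)).aestronglyMeasurable

lemma quad_nonneg (p : ι → ℝ) (hp : ∀ i, 0 ≤ p i) (hp1 : ∑ i, p i = 1) (D : ι → ι → ℝ)
    (hD : ∀ i j, 0 ≤ D i i + D j j - D i j - D j i) :
    0 ≤ ∑ i, p i * (D i i - ∑ j, p j * D i j) := by
  have h : 0 ≤ ∑ i, ∑ j, p i * p j * (D i i + D j j - D i j - D j i) :=
    Finset.sum_nonneg fun i _ => Finset.sum_nonneg fun j _ =>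
      mul_nonneg (mul_nonneg (hp i) (hp j)) (hD i j)
  have e1 : ∑ i, ∑ j, p i * p j * D i i = ∑ i, p i * D i i := by
    refine Finset.sum_congr rfl fun i _ => ?_
    rw [← Finset.sum_mul, ← Finset.mul_sum, hp1, mul_one]
  have e2 : ∑ i, ∑ j, p i * p j * D j j = ∑ i, p i * D i i := by
    rw [Finset.sum_comm, ← e1]
    refine Finset.sum_congr rfl fun i _ => Finset.sum_congr rfl fun j _ => by ring
  have e3 : ∑ i, ∑ j, p i * p j * D j i = ∑ i, ∑ j, p i * p j * D i j := by
    rw [Finset.sum_comm]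
    refine Finset.sum_congr rfl fun i _ => Finset.sum_congr rfl fun j _ => by ring
  have e4 : ∑ i, p i * (D i i - ∑ j, p j * D i j)
      = ∑ i, p i * D i i - ∑ i, ∑ j, p i * p j * D i j := by
    simp only [mul_sub, Finset.sum_sub_distrib, Finset.mul_sum, mul_assoc]
  simp only [mul_sub, mul_add, Finset.sum_sub_distrib, Finset.sum_add_distrib] at h
  rw [e1, e2, e3] at h
  rw [e4]; linarith

lemma int4 {f g h k : Ω → ℝ} (hf : Integrable f P) (hg : Integrable g P) (hh : Integrable h P)
    (hk : Integrable k P) (a b c d : ℝ) :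
    ∫ ω, (a * f ω + b * g ω + c * h ω + d * k ω) ∂P =
      a * ∫ ω, f ω ∂P + b * ∫ ω, g ω ∂P + c * ∫ ω, h ω ∂P + d * ∫ ω, k ω ∂P := by
  have i1 := hf.const_mul a
  have i2 := hg.const_mul b
  have i3 := hh.const_mul c
  have i4 := hk.const_mul d
  have i12 : Integrable (fun ω => a * f ω + b * g ω) P := i1.add i2
  have i123 : Integrable (fun ω => a * f ω + b * g ω + c * h ω) P := i12.add i3
  rw [integral_add i123 i4, integral_add i12 i3, integral_add i1 i2]
  simp only [integral_const_mul]

lemma sf_lse {X Y : ι → Ω → ℝ}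
    (hG : ∀ (c d : ι → ℝ), CG P (fun ω => ∑ i, c i * X i ω + ∑ i, d i * Y i ω))
    (hXY : ∀ i j, ∫ ω, X i ω * Y j ω ∂P = 0)
    (hinc : ∀ i j, ∫ ω, (X i ω - X j ω) ^ 2 ∂P ≤ ∫ ω, (Y i ω - Y j ω) ^ 2 ∂P) :
    ∫ ω, lse (fun i => X i ω) ∂P ≤ ∫ ω, lse (fun i => Y i ω) ∂P := by
  classical
  have hX : ∀ i, CG P (X i) := fun i => by
    simpa [Pi.single_apply] using hG (Pi.single i 1) 0
  have hY : ∀ i, CG P (Y i) := fun i => by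
    simpa [Pi.single_apply] using hG 0 (Pi.single i 1)
  have hXm := fun i => (hX i).1
  have hYm := fun i => (hY i).1
  set Z : ℝ → ι → Ω → ℝ := fun θ i ω => cos θ * X i ω + sin θ * Y i ω with hZ
  set Z' : ℝ → ι → Ω → ℝ := fun θ i ω => - sin θ * X i ω + cos θ * Y i ω with hZ'
  have hZG : ∀ θ i (c : ι → ℝ) (d : ℝ), CG P (fun ω => ∑ j, c j * Z θ j ω + d * Z' θ i ω) := by
    intro θ i c d
    have := hG (fun j => c j * cos θ + (Pi.single i (- d * sin θ) : ι → ℝ) j)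
      (fun j => c j * sin θ + (Pi.single i (d * cos θ) : ι → ℝ) j)
    convert this using 2 with ω
    simp only [hZ, hZ', add_mul, Finset.sum_add_distrib, mul_add, Pi.single_apply, ite_mul,
      zero_mul, Finset.sum_ite_eq', Finset.mem_univ, if_true, mul_assoc]
    ring
  have hZc : ∀ θ i, CG P (Z θ i) := fun θ i => CG_single (hZG θ i) i
  have hZc' : ∀ θ i, CG P (Z' θ i) := fun θ i => CG_right (hZG θ i)
  have hsmm : ∀ θ i, Measurable fun ω => smx i (fun j => Z θ j ω) := fun θ i =>
    (continuous_smx i).measurable.comp (measurable_pi_lambda _ fun j => (hZc θ j).1)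
  have hder : ∀ θ, HasDerivAt (fun θ => ∫ ω, lse (fun i => Z θ i ω) ∂P)
      (∫ ω, ∑ i, smx i (fun j => Z θ j ω) * Z' θ i ω ∂P) θ := by
    intro θ
    refine (hasDerivAt_integral_of_dominated_loc_of_deriv_le (s := univ)
      (F := fun θ ω => lse (fun i => Z θ i ω))
      (F' := fun θ ω => ∑ i, smx i (fun j => Z θ j ω) * Z' θ i ω)
      (bound := fun ω => ∑ i, (|X i ω| + |Y i ω|)) univ_mem ?_ ?_ ?_ ?_ ?_ ?_).2
    · exact Eventually.of_forall fun t => (continuous_lse.measurable.comp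
        (measurable_pi_lambda _ fun i => (hZc t i).1)).aestronglyMeasurable
    · exact integrable_lse (fun i => (hZc θ i).1) (fun i => (hZc θ i).integrable)
    · exact (Finset.measurable_sum _ fun i _ => (hsmm θ i).mul (hZc' θ i).1).aestronglyMeasurable
    · refine ae_of_all _ fun ω t _ => ?_
      refine (abs_smx_comb_le _ (fun i => Z' t i ω)).trans (Finset.sum_le_sum fun i _ => ?_)
      simp only [hZ']
      refine (abs_add_le _ _).trans (add_le_add ?_ ?_) <;> rw [abs_mul]
      · rw [abs_neg]; exact mul_le_of_le_one_left (abs_nonneg _) (abs_sin_le_one t)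
      · exact mul_le_of_le_one_left (abs_nonneg _) (abs_cos_le_one t)
    · exact integrable_finsetSum _ fun i _ => (hX i).integrable.abs.add (hY i).integrable.abs
    · refine ae_of_all _ fun ω t _ => ?_
      refine hasDerivAt_lse (fun t i => Z t i ω) (fun i => Z' t i ω) t fun i => ?_
      exact ((hasDerivAt_cos t).mul_const _).add ((hasDerivAt_sin t).mul_const _)
  -- covariances
  set D : ι → ι → ℝ := fun i j => ∫ ω, Y i ω * Y j ω ∂P - ∫ ω, X i ω * X j ω ∂P with hD
  have hcov : ∀ θ i j, ∫ ω, Z θ j ω * Z' θ i ω ∂P = sin θ * cos θ * D i j := by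
    intro θ i j
    have e : ∀ ω, Z θ j ω * Z' θ i ω = (-(sin θ * cos θ)) * (X i ω * X j ω)
        + cos θ ^ 2 * (X j ω * Y i ω) + (-(sin θ ^ 2)) * (X i ω * Y j ω)
        + sin θ * cos θ * (Y i ω * Y j ω) := by
      intro ω; simp only [hZ, hZ']; ring
    simp only [e]
    rw [int4 ((hX i).integrable_mul (hX j)) ((hX j).integrable_mul (hY i))
      ((hX i).integrable_mul (hY j)) ((hY i).integrable_mul (hY j))]
    simp only [hXY, hD]
    ring
  have hDn : ∀ i j, 0 ≤ D i i + D j j - D i j - D j i := by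
    intro i j
    have ex : ∀ (V : ι → Ω → ℝ), (∀ i, CG P (V i)) → ∫ ω, (V i ω - V j ω) ^ 2 ∂P =
        ∫ ω, V i ω * V i ω ∂P + ∫ ω, V j ω * V j ω ∂P - ∫ ω, V i ω * V j ω ∂P
          - ∫ ω, V j ω * V i ω ∂P := by
      intro V hV
      have e := int4 ((hV i).integrable_mul (hV i)) ((hV j).integrable_mul (hV j))
        ((hV i).integrable_mul (hV j)) ((hV j).integrable_mul (hV i)) 1 1 (-1) (-1)
      have e' : ∀ ω, (V i ω - V j ω) ^ 2 = 1 * (V i ω * V i ω) + 1 * (V j ω * V j ω)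
          + (-1) * (V i ω * V j ω) + (-1) * (V j ω * V i ω) := fun ω => by ring
      simp only [e']
      rw [e]; ring
    have := hinc i j
    rw [ex X hX, ex Y hY] at this
    simp only [hD]; linarith
  have hnn : ∀ θ ∈ Icc 0 (π / 2), 0 ≤ ∫ ω, ∑ i, smx i (fun j => Z θ j ω) * Z' θ i ω ∂P := by
    intro θ hθ
    have hs : 0 ≤ sin θ := sin_nonneg_of_nonneg_of_le_pi hθ.1 (by linarith [hθ.2, pi_pos])
    have hc : 0 ≤ cos θ := cos_nonneg_of_mem_Icc ⟨by linarith [hθ.1, pi_pos], hθ.2⟩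
    rw [integral_finsetSum]
    · have e : ∀ i, ∫ ω, smx i (fun j => Z θ j ω) * Z' θ i ω ∂P
          = ∫ ω, smx i (fun j => Z θ j ω) * (sin θ * cos θ * D i i -
              ∑ j, smx j (fun j => Z θ j ω) * (sin θ * cos θ * D i j)) ∂P := by
        intro i
        rw [← ibp (hZG θ i) i (fun j => sin θ * cos θ * D i j) (hcov θ i)]
        congr 1; ext ω; ring
      simp only [e]
      rw [← integral_finsetSum]
      · refine integral_nonneg fun ω => ?_
        refine quad_nonneg (fun i => smx i (fun j => Z θ j ω)) (fun i => smx_nonneg _ _)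
          (smx_sum _) (fun i j => sin θ * cos θ * D i j) fun i j => ?_
        have := mul_nonneg (mul_nonneg hs hc) (hDn i j)
        linarith
      · intro i _
        refine Integrable.of_bound ?_ (2 * ∑ j, |sin θ * cos θ * D i j|)
          (ae_of_all _ fun ω => abs_dsmx_le i _ (fun j => sin θ * cos θ * D i j))
        exact ((hsmm θ i).mul (measurable_const.sub (Finset.measurable_sum _ fun j _ =>
          (hsmm θ j).mul_const _))).aestronglyMeasurable
    · intro i _
      exact (hZc' θ i).integrable.bdd_mul (c := 1) (hsmm θ i).aestronglyMeasurable
        (ae_of_all _ fun ω => abs_smx_le_one _ _)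
  have hmono : MonotoneOn (fun θ => ∫ ω, lse (fun i => Z θ i ω) ∂P) (Icc 0 (π / 2)) := by
    refine monotoneOn_of_deriv_nonneg (convex_Icc _ _)
      (fun θ _ => (hder θ).continuousAt.continuousWithinAt)
      (fun θ _ => (hder θ).differentiableAt.differentiableWithinAt) fun θ hθ => ?_
    rw [(hder θ).deriv]
    exact hnn θ (interior_subset hθ)
  have := hmono (left_mem_Icc.2 (by positivity)) (right_mem_Icc.2 (by positivity))
    (by positivity : (0:ℝ) ≤ π / 2)
  simpa [hZ] using this

/-- maximum of finitely many random variables -/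
noncomputable def mx (z : ι → ℝ) : ℝ := Finset.univ.sup' Finset.univ_nonempty z

lemma le_mx (z : ι → ℝ) (i : ι) : z i ≤ mx z := Finset.le_sup' z (Finset.mem_univ i)

lemma mx_le (z : ι → ℝ) (m : ℝ) (h : ∀ i, z i ≤ m) : mx z ≤ m :=
  Finset.sup'_le _ _ fun i _ => h i

lemma exists_mx (z : ι → ℝ) : ∃ i, mx z = z i := by
  obtain ⟨i, _, h⟩ := Finset.exists_mem_eq_sup' Finset.univ_nonempty z
  exact ⟨i, h⟩

lemma measurable_mx {Z : ι → Ω → ℝ} (hm : ∀ i, Measurable (Z i)) :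
    Measurable (fun ω => mx (fun i => Z i ω)) := by
  have := Finset.measurable_sup' (s := Finset.univ) Finset.univ_nonempty (f := Z) (fun i _ => hm i)
  convert this using 1
  ext ω
  simp [mx, Finset.sup'_apply]

lemma integrable_mx {Z : ι → Ω → ℝ} (hm : ∀ i, Measurable (Z i)) (hi : ∀ i, Integrable (Z i) P) :
    Integrable (fun ω => mx (fun i => Z i ω)) P := by
  have : Integrable (fun ω => ∑ i, |Z i ω|) P :=
    integrable_finsetSum _ fun i _ => (hi i).abs
  refine this.mono' (measurable_mx hm).aestronglyMeasurable (ae_of_all _ fun ω => ?_)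
  obtain ⟨i, h⟩ := exists_mx (fun i => Z i ω)
  rw [h]
  exact Finset.single_le_sum (f := fun i => |Z i ω|) (fun j _ => abs_nonneg _) (Finset.mem_univ i)

/-- Sudakov-Fernique inequality -/
lemma sudakov_fernique {X Y : ι → Ω → ℝ}
    (hG : ∀ (c d : ι → ℝ), CG P (fun ω => ∑ i, c i * X i ω + ∑ i, d i * Y i ω))
    (hXY : ∀ i j, ∫ ω, X i ω * Y j ω ∂P = 0)
    (hinc : ∀ i j, ∫ ω, (X i ω - X j ω) ^ 2 ∂P ≤ ∫ ω, (Y i ω - Y j ω) ^ 2 ∂P) :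
    ∫ ω, mx (fun i => X i ω) ∂P ≤ ∫ ω, mx (fun i => Y i ω) ∂P := by
  classical
  have hX : ∀ i, CG P (X i) := fun i => by
    simpa [Pi.single_apply] using hG (Pi.single i 1) 0
  have hY : ∀ i, CG P (Y i) := fun i => by
    simpa [Pi.single_apply] using hG 0 (Pi.single i 1)
  have main : ∀ β : ℝ, 0 < β → β * ∫ ω, mx (fun i => X i ω) ∂P ≤
      β * ∫ ω, mx (fun i => Y i ω) ∂P + Real.log (Fintype.card ι) := by
    intro β hβ
    have h1 := sf_lse (P := P) (X := fun i ω => β * X i ω) (Y := fun i ω => β * Y i ω)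
      (fun c d => by
        have := hG (fun i => c i * β) (fun i => d i * β)
        simpa only [mul_assoc] using this)
      (fun i j => by
        have : ∀ ω, β * X i ω * (β * Y j ω) = β ^ 2 * (X i ω * Y j ω) := fun ω => by ring
        simp only [this, integral_const_mul, hXY, mul_zero])
      (fun i j => by
        have : ∀ (V : ι → Ω → ℝ) ω, (β * V i ω - β * V j ω) ^ 2 = β ^ 2 * (V i ω - V j ω) ^ 2 :=
          fun V ω => by ring
        simp only [this, integral_const_mul]
        exact mul_le_mul_of_nonneg_left (hinc i j) (by positivity))
    have hXm := fun i => (hX i).1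
    have hYm := fun i => (hY i).1
    have h2 : β * ∫ ω, mx (fun i => X i ω) ∂P ≤ ∫ ω, lse (fun i => β * X i ω) ∂P := by
      rw [← integral_const_mul]
      refine integral_mono ((integrable_mx hXm fun i => (hX i).integrable).const_mul _)
        (integrable_lse (fun i => (hXm i).const_mul β) fun i => (hX i).integrable.const_mul β)
        fun ω => ?_
      obtain ⟨i, h⟩ := exists_mx (fun i => X i ω)
      simp only [h]
      exact le_lse i (fun i => β * X i ω)
    have h3 : ∫ ω, lse (fun i => β * Y i ω) ∂P ≤
        β * ∫ ω, mx (fun i => Y i ω) ∂P + Real.log (Fintype.card ι) := by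
      have ib := (integrable_mx hYm fun i => (hY i).integrable).const_mul β
      have : ∫ ω, (β * mx (fun i => Y i ω) + Real.log (Fintype.card ι)) ∂P
          = β * ∫ ω, mx (fun i => Y i ω) ∂P + Real.log (Fintype.card ι) := by
        rw [integral_add ib (integrable_const _), integral_const_mul]; simp
      rw [← this]
      refine integral_mono (integrable_lse (fun i => (hYm i).const_mul β)
        fun i => (hY i).integrable.const_mul β) (ib.add (integrable_const _)) fun ω => ?_
      exact lse_le _ _ fun i => mul_le_mul_of_nonneg_left (le_mx (fun i => Y i ω) i) hβ.le
    linarith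
  by_contra! hlt
  set A := ∫ ω, mx (fun i => X i ω) ∂P
  set B := ∫ ω, mx (fun i => Y i ω) ∂P
  have hn : 0 ≤ Real.log (Fintype.card ι) := Real.log_natCast_nonneg _
  have := main ((Real.log (Fintype.card ι) + 1) / (A - B)) (div_pos (by linarith) (by linarith))
  have h5 : (Real.log (Fintype.card ι) + 1) / (A - B) * (A - B) = Real.log (Fintype.card ι) + 1 :=
    div_mul_cancel₀ _ (by linarith)
  rw [mul_sub] at h5
  linarith

end SF

section RW

lemma map_prod_add {Ω Ω' : Type*} [MeasurableSpace Ω] [MeasurableSpace Ω'] {P : Measure Ω}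
    {Q : Measure Ω'} [IsProbabilityMeasure P] [IsProbabilityMeasure Q] {f : Ω → ℝ} {g : Ω' → ℝ}
    (hf : Measurable f) (hg : Measurable g) {v w : NNReal} (hv : P.map f = gaussianReal 0 v)
    (hw : Q.map g = gaussianReal 0 w) :
    (P.prod Q).map (fun p => f p.1 + g p.2) = gaussianReal 0 (v + w) := by
  have hi : IndepFun (fun p : Ω × Ω' => f p.1) (fun p => g p.2) (P.prod Q) := indepFun_prod hf hg
  have h1 : (P.prod Q).map (fun p => f p.1) = gaussianReal 0 v := by
    rw [← hv, show (fun p : Ω × Ω' => f p.1) = f ∘ Prod.fst from rfl, ← Measure.map_map hf measurable_fst]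
    simp
  have h2 : (P.prod Q).map (fun p => g p.2) = gaussianReal 0 w := by
    rw [← hw, show (fun p : Ω × Ω' => g p.2) = g ∘ Prod.snd from rfl, ← Measure.map_map hg measurable_snd]
    simp
  have := gaussianReal_add_gaussianReal_of_indepFun hi h1 h2
  rw [add_zero] at this
  exact this

lemma CG.prod_add {Ω Ω' : Type*} [MeasurableSpace Ω] [MeasurableSpace Ω'] {P : Measure Ω}
    {Q : Measure Ω'} [IsProbabilityMeasure P] [IsProbabilityMeasure Q] {f : Ω → ℝ} {g : Ω' → ℝ}
    (hf : CG P f) (hg : CG Q g) : CG (P.prod Q) (fun p => f p.1 + g p.2) := by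
  obtain ⟨hf, v, hv⟩ := hf
  obtain ⟨hg, w, hw⟩ := hg
  exact ⟨by fun_prop, v + w, map_prod_add hf hg hv hw⟩

lemma CG_mul_id (v : NNReal) (c : ℝ) : CG (gaussianReal 0 v) (fun x => c * x) :=
  ⟨by fun_prop, _, by rw [gaussianReal_map_const_mul, mul_zero]⟩

lemma abs_shift (v : NNReal) (r : ℝ) :
    ∫ x, |x| ∂(gaussianReal 0 v) ≤ ∫ x, |x - r| ∂(gaussianReal 0 v) := by
  have hid : Integrable (fun x : ℝ => x) (gaussianReal 0 v) :=
    memLp_one_iff_integrable.1 (memLp_id_gaussianReal' (μ := 0) (v := v) 1 (by simp))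
  have i1 : Integrable (fun x : ℝ => |x - r|) (gaussianReal 0 v) := (hid.sub (integrable_const r)).abs
  have i2 : Integrable (fun x : ℝ => |x + r|) (gaussianReal 0 v) := (hid.add (integrable_const r)).abs
  have h1 : ∫ x, |x - r| ∂(gaussianReal 0 v) = ∫ x, |x + r| ∂(gaussianReal 0 v) := by
    conv_lhs => rw [← neg_zero, ← gaussianReal_map_neg]
    rw [integral_map (by fun_prop) (by fun_prop)]
    congr 1; ext x
    rw [← abs_neg]; congr 1; ring
  have h2 : ∫ x, 2 * |x| ∂(gaussianReal 0 v) ≤ ∫ x, (|x - r| + |x + r|) ∂(gaussianReal 0 v) := by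
    refine integral_mono (hid.abs.const_mul 2) (i1.add i2) fun x => ?_
    have := abs_add_le (x - r) (x + r)
    have e : x - r + (x + r) = 2 * x := by ring
    rw [e, abs_mul] at this
    simpa using this
  rw [integral_add i1 i2, integral_const_mul] at h2
  linarith

lemma mx_snoc {n : ℕ} (z : Fin (n + 1) → ℝ) (x : ℝ) :
    mx (Fin.snoc (fun i => z i + x) 0 : Fin (n + 2) → ℝ) = max (mx z + x) 0 := by
  apply le_antisymm
  · refine mx_le _ _ fun i => ?_
    refine Fin.lastCases ?_ (fun j => ?_) i
    · simp
    · simp only [Fin.snoc_castSucc]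
      exact le_max_of_le_left (by linarith [le_mx z j])
  · refine max_le ?_ ?_
    · obtain ⟨i, hi⟩ := exists_mx z
      rw [hi]
      have := le_mx (Fin.snoc (fun i => z i + x) 0 : Fin (n + 2) → ℝ) i.castSucc
      simpa using this
    · have := le_mx (Fin.snoc (fun i => z i + x) 0 : Fin (n + 2) → ℝ) (Fin.last _)
      simpa using this

lemma rw_exists (v : NNReal) (n : ℕ) :
    ∃ (Ω : Type) (_ : MeasurableSpace Ω) (Q : Measure Ω) (_ : IsProbabilityMeasure Q)
      (Y : Fin (n + 1) → Ω → ℝ),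
      (∀ c : Fin (n + 1) → ℝ, CG Q (fun ω => ∑ i, c i * Y i ω)) ∧
      (∀ i j, ∫ ω, (Y i ω - Y j ω) ^ 2 ∂Q = |(i : ℝ) - j| * v) ∧
      Q.map (Y 0) = gaussianReal 0 (n * v) ∧
      (∀ ω, Y (Fin.last n) ω = 0) ∧
      ∀ m : ℝ, 0 ≤ m → ∫ ω, max (mx (fun i => Y i ω) - m) 0 ∂Q ≤
        ∫ ω, ((Y 0 ω - m) + |Y 0 ω - m|) ∂Q := by
  induction n with
  | zero =>
    refine ⟨Unit, inferInstance, Measure.dirac (), inferInstance, fun _ _ => 0, ?_, ?_, ?_, ?_, ?_⟩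
    · intro c
      refine ⟨by fun_prop, 0, ?_⟩
      simp [Measure.map_dirac]
    · intro i j
      have : i = j := Fin.ext (by omega)
      simp [this]
    · simp [Measure.map_dirac]
    · simp
    · intro m hm
      have : mx (fun _ : Fin 1 => (0:ℝ)) = 0 := by
        obtain ⟨i, hi⟩ := exists_mx (fun _ : Fin 1 => (0:ℝ)); exact hi
      simp [this, hm, abs_of_nonneg hm]
  | succ n ih =>
    obtain ⟨Ω, _, Q, _, Y, hG, hinc, h0, hl, hmax⟩ := ih
    have hY : ∀ i, CG Q (Y i) := fun i => by
      classical
      simpa [Pi.single_apply] using hG (Pi.single i 1)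
    have hYm := fun i => (hY i).1
    have hid : Integrable (fun x : ℝ => x) (gaussianReal 0 v) :=
      memLp_one_iff_integrable.1 (memLp_id_gaussianReal' (μ := 0) (v := v) 1 (by simp))
    set W : Ω → ℝ := fun ω => mx (fun i => Y i ω) with hW
    have hWi : Integrable W Q := integrable_mx hYm fun i => (hY i).integrable
    have hW0 : ∀ ω, 0 ≤ W ω := fun ω => by
      have := le_mx (fun i => Y i ω) (Fin.last n); rwa [hl] at this
    have hsq : ∀ i : Fin (n + 1), ∫ p, (Y i p.1 + p.2) ^ 2 ∂(Q.prod (gaussianReal 0 v))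
        = ((n : ℝ) + 1 - i) * v := by
      intro i
      obtain ⟨hm, w, hw⟩ := hY i
      have h1 := CG.sq_eq (P := Q.prod (gaussianReal 0 v)) (X := fun p => Y i p.1 + p.2)
        (by fun_prop) (map_prod_add (w := v) (Q := gaussianReal 0 v) hm measurable_id' hw Measure.map_id')
      rw [h1]
      have h2 := hinc i (Fin.last n)
      simp only [hl, sub_zero] at h2
      rw [CG.sq_eq hm hw] at h2
      push_cast
      rw [h2]
      have : (i : ℝ) ≤ n := by exact_mod_cast Fin.le_last i
      rw [Fin.val_last, abs_of_nonpos (by linarith)]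
      ring
    refine ⟨Ω × ℝ, inferInstance, Q.prod (gaussianReal 0 v), inferInstance,
      fun i p => (Fin.snoc (fun i => Y i p.1 + p.2) 0 : Fin (n + 2) → ℝ) i, ?_, ?_, ?_, ?_, ?_⟩
    · intro c
      have := (hG (fun i => c i.castSucc)).prod_add (CG_mul_id v (∑ i : Fin (n + 1), c i.castSucc))
      convert this using 2 with p
      rw [Fin.sum_univ_castSucc]
      simp [mul_add, Finset.sum_add_distrib, Finset.sum_mul]
    · intro i j
      refine Fin.lastCases ?_ (fun i => ?_) i <;> refine Fin.lastCases ?_ (fun j => ?_) j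
      · simp
      · simp only [Fin.snoc_castSucc, Fin.snoc_last, zero_sub, neg_sq, hsq, Fin.val_last,
          Fin.val_castSucc]
        have : (j : ℝ) ≤ n := by exact_mod_cast Fin.le_last j
        push_cast
        rw [abs_of_nonneg (by linarith)]
      · simp only [Fin.snoc_castSucc, Fin.snoc_last, sub_zero, hsq, Fin.val_last,
          Fin.val_castSucc]
        have : (i : ℝ) ≤ n := by exact_mod_cast Fin.le_last i
        push_cast
        rw [abs_of_nonpos (by linarith)]
        ring
      · simp only [Fin.snoc_castSucc, Fin.val_castSucc, add_sub_add_right_eq_sub]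
        rw [← hinc i j, integral_fun_fst (f := fun ω => (Y i ω - Y j ω) ^ 2)]
        simp
    · have e : (fun p : Ω × ℝ => (Fin.snoc (fun i => Y i p.1 + p.2) 0 : Fin (n + 2) → ℝ) 0)
          = fun p => Y 0 p.1 + p.2 := by
        ext p
        have := Fin.snoc_castSucc (α := fun _ : Fin (n + 2) => ℝ) 0 (fun i => Y i p.1 + p.2) 0
        simpa using this
      change Measure.map (fun p : Ω × ℝ => (Fin.snoc (fun i => Y i p.1 + p.2) 0 : Fin (n + 2) → ℝ) 0) _ = _
      rw [e, map_prod_add (w := v) (Q := gaussianReal 0 v) (hYm 0) measurable_id' h0 Measure.map_id']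
      congr 1
      push_cast; ring
    · intro p; simp
    · intro m hm
      have e : ∀ p : Ω × ℝ, (Fin.snoc (fun i => Y i p.1 + p.2) 0 : Fin (n + 2) → ℝ) 0
          = Y 0 p.1 + p.2 := by
        intro p
        have := Fin.snoc_castSucc (α := fun _ : Fin (n + 2) => ℝ) 0 (fun i => Y i p.1 + p.2) 0
        simpa using this
      have e2 : ∀ p : Ω × ℝ, max (mx (fun i => (Fin.snoc (fun i => Y i p.1 + p.2) 0 : Fin (n + 2) → ℝ) i) - m) 0
          = max (W p.1 - (m - p.2)) 0 := by
        intro p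
        rw [show (fun i => (Fin.snoc (fun i => Y i p.1 + p.2) 0 : Fin (n + 2) → ℝ) i)
          = (Fin.snoc (fun i => Y i p.1 + p.2) 0 : Fin (n + 2) → ℝ) from rfl,
          mx_snoc (fun i => Y i p.1)]
        simp only [hW]
        rcases le_total 0 (mx (fun i => Y i p.1) + p.2) with h | h
        · rw [max_eq_left h]; congr 1; ring
        · rw [max_eq_right h, max_eq_right (by linarith), max_eq_right (by linarith)]
      have e3 : ∀ p : Ω × ℝ, Y 0 p.1 + p.2 - m = Y 0 p.1 - (m - p.2) := fun p => by ring
      simp only [e, e2, e3]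
      have i1 : Integrable (fun p : Ω × ℝ => max (W p.1 - (m - p.2)) 0) (Q.prod (gaussianReal 0 v)) :=
        ((hWi.comp_fst _).sub ((integrable_const m).sub (hid.comp_snd _))).pos_part
      have i20 : Integrable (fun p : Ω × ℝ => Y 0 p.1 - (m - p.2)) (Q.prod (gaussianReal 0 v)) :=
        (((hY 0).integrable.comp_fst _).sub ((integrable_const m).sub (hid.comp_snd _)))
      have i2 : Integrable (fun p : Ω × ℝ => Y 0 p.1 - (m - p.2) + |Y 0 p.1 - (m - p.2)|)
          (Q.prod (gaussianReal 0 v)) := i20.add i20.abs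
      rw [integral_prod_symm _ i1, integral_prod_symm _ i2]
      refine integral_mono i1.integral_prod_right i2.integral_prod_right fun x => ?_
      simp only
      generalize hr : m - x = r
      rcases le_total 0 r with h | h
      · exact hmax r h
      · have h3 := hmax 0 le_rfl
        have a1 : ∀ ω, max (W ω - r) 0 = max (W ω - 0) 0 - r := fun ω => by
          have := hW0 ω
          rw [max_eq_left (by linarith), max_eq_left (by linarith)]; ring
        have hYi := (hY 0).integrable
        have j1 : Integrable (fun ω => max (W ω - 0) 0) Q := (hWi.sub (integrable_const 0)).pos_part
        have j2 : Integrable (fun ω => Y 0 ω - r) Q := hYi.sub (integrable_const r)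
        simp only [a1]
        rw [integral_sub j1 (integrable_const r), integral_add j2 j2.abs,
          integral_sub hYi (integrable_const r), (hY 0).integral_eq_zero]
        simp only [sub_zero] at h3 ⊢
        rw [integral_add hYi hYi.abs, (hY 0).integral_eq_zero] at h3
        have h4 := abs_shift (n * v) r
        rw [← h0, integral_map (hYm 0).aemeasurable (by fun_prop),
          integral_map (hYm 0).aemeasurable (by fun_prop)] at h4
        linarith

lemma rw_exists' (v : NNReal) (n : ℕ) :
    ∃ (Ω : Type) (_ : MeasurableSpace Ω) (Q : Measure Ω) (_ : IsProbabilityMeasure Q)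
      (Y : Fin (n + 1) → Ω → ℝ),
      (∀ c : Fin (n + 1) → ℝ, CG Q (fun ω => ∑ i, c i * Y i ω)) ∧
      (∀ i j, ∫ ω, (Y i ω - Y j ω) ^ 2 ∂Q = |(i : ℝ) - j| * v) ∧
      ∫ ω, mx (fun i => Y i ω) ∂Q ≤ √2 * √(n * v) / √π := by
  obtain ⟨Ω, i1, Q, i2, Y, hG, hinc, h0, hl, hmax⟩ := rw_exists v n
  refine ⟨Ω, i1, Q, i2, Y, hG, hinc, ?_⟩
  have hY : CG Q (Y 0) := by
    classical
    simpa [Pi.single_apply] using hG (Pi.single 0 1)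
  have h := hmax 0 le_rfl
  simp only [sub_zero] at h
  rw [integral_add hY.integrable hY.integrable.abs, hY.integral_eq_zero, zero_add] at h
  have e : ∀ ω, max (mx (fun i => Y i ω)) 0 = mx (fun i => Y i ω) := fun ω => by
    have := le_mx (fun i => Y i ω) (Fin.last n)
    rw [hl] at this
    exact max_eq_left this
  simp only [e] at h
  have h4 := integral_abs_gaussianReal (n * v)
  rw [← h0, integral_map hY.1.aemeasurable (by fun_prop)] at h4
  rw [h4] at h
  simpa using h

end RW

section FBM

variable {Ω : Type*} [MeasurableSpace Ω] {P : Measure Ω} [IsProbabilityMeasure P] {H a : ℝ}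
  {B : ℝ → Ω → ℝ}

lemma IsFBM.comb (hB : IsFBM P H B) {n : ℕ} (t c : Fin n → ℝ) :
    CG P (fun ω => ∑ i, c i * B (t i) ω) := by
  have := hB.measurable
  exact ⟨by fun_prop, hB.gaussian n t c⟩

lemma IsFBM.cg (hB : IsFBM P H B) (t : ℝ) : CG P (B t) := by
  simpa using hB.comb (fun _ : Fin 1 => t) (fun _ => 1)

lemma IsFBM.sq (hB : IsFBM P H B) (hH : 0 < H) {t : ℝ} (ht : 0 ≤ t) :
    ∫ ω, B t ω * B t ω ∂P = t ^ (2 * H) := by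
  rw [hB.cov t t ht ht, sub_self, abs_zero, Real.zero_rpow (by linarith)]
  ring

lemma IsFBM.inc (hB : IsFBM P H B) (hH : 0 < H) {s t : ℝ} (hs : 0 ≤ s) (ht : 0 ≤ t) :
    ∫ ω, (B s ω - B t ω) ^ 2 ∂P = |t - s| ^ (2 * H) := by
  have e : ∀ ω, (B s ω - B t ω) ^ 2 = (B s ω * B s ω + B t ω * B t ω) - 2 * (B s ω * B t ω) :=
    fun ω => by ring
  have h1 := (hB.cg s).integrable_mul (hB.cg s)
  have h2 := (hB.cg t).integrable_mul (hB.cg t)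
  have h3 := (hB.cg s).integrable_mul (hB.cg t)
  simp only [e]
  have h12 : Integrable (fun ω => B s ω * B s ω + B t ω * B t ω) P := h1.add h2
  rw [integral_sub h12 (h3.const_mul 2), integral_add h1 h2, integral_const_mul,
    hB.sq hH hs, hB.sq hH ht, hB.cov s t hs ht]
  ring

/-- maximum over the grid with `n + 1` steps -/
noncomputable def gridMax (B : ℝ → Ω → ℝ) (a : ℝ) (n : ℕ) (ω : Ω) : ℝ :=
  mx (fun i : Fin (n + 1 + 1) => B (a * ((i : ℝ) / ((n + 1 : ℕ) : ℝ))) ω)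

lemma IsFBM.gridMax_le (hB : IsFBM P H B) (hH : 1 / 2 ≤ H) (ha : 0 < a) (n : ℕ) :
    ∫ ω, gridMax B a n ω ∂P ≤ √2 * a ^ H / √π := by
  have hN : (0 : ℝ) < ((n + 1 : ℕ) : ℝ) := by positivity
  set N : ℝ := ((n + 1 : ℕ) : ℝ) with hNdef
  have hv0 : 0 ≤ a ^ (2 * H) / N := by positivity
  obtain ⟨Ω', _, Q, _, Y, hG, hinc, hbd⟩ := rw_exists' ⟨a ^ (2 * H) / N, hv0⟩ (n + 1)
  have hY : ∀ i, CG Q (Y i) := fun i => by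
    classical
    simpa [Pi.single_apply] using hG (Pi.single i 1)
  set X : Fin (n + 1 + 1) → Ω → ℝ := fun i => B (a * ((i : ℝ) / N)) with hX
  have hXc : ∀ i, CG P (X i) := fun i => hB.cg _
  have key := sudakov_fernique (P := P.prod Q) (X := fun i p => X i p.1) (Y := fun i p => Y i p.2)
    (fun c d => (hB.comb (fun i : Fin (n + 1 + 1) => a * ((i : ℝ) / N)) c).prod_add (hG d))
    (fun i j => by
      rw [integral_prod_mul (X i) (Y j), (hXc i).integral_eq_zero, zero_mul])
    (fun i j => by
      rw [integral_fun_fst (fun ω => (X i ω - X j ω) ^ 2),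
        integral_fun_snd (fun ω => (Y i ω - Y j ω) ^ 2), hinc i j, hX]
      simp only [probReal_univ, one_smul]
      rw [hB.inc (by linarith) (by positivity) (by positivity)]
      have e : |a * ((j : ℝ) / N) - a * ((i : ℝ) / N)| = a * (|(i : ℝ) - j| / N) := by
        rw [← mul_sub, ← sub_div, abs_mul, abs_div, abs_of_pos ha, abs_of_pos hN, abs_sub_comm]
      rw [e, Real.mul_rpow ha.le (by positivity)]
      have h1 : |(i : ℝ) - j| / N ≤ 1 := by
        rw [div_le_one hN, abs_le]
        have hi : (i : ℝ) ≤ N := by rw [hNdef]; exact_mod_cast Fin.is_le i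
        have hj : (j : ℝ) ≤ N := by rw [hNdef]; exact_mod_cast Fin.is_le j
        have hi0 : (0 : ℝ) ≤ (i : ℝ) := by positivity
        have hj0 : (0 : ℝ) ≤ (j : ℝ) := by positivity
        constructor <;> linarith
      have h2 : (|(i : ℝ) - j| / N) ^ (2 * H) ≤ |(i : ℝ) - j| / N := by
        rcases eq_or_lt_of_le (show 0 ≤ |(i : ℝ) - j| / N by positivity) with h | h
        · rw [← h, Real.zero_rpow (by linarith)]
        · have := Real.rpow_le_rpow_of_exponent_ge h h1 (show (1 : ℝ) ≤ 2 * H by linarith)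
          rwa [Real.rpow_one] at this
      calc a ^ (2 * H) * (|(i : ℝ) - j| / N) ^ (2 * H)
          ≤ a ^ (2 * H) * (|(i : ℝ) - j| / N) := by gcongr
        _ = |(i : ℝ) - j| * (a ^ (2 * H) / N) := by ring)
  rw [integral_fun_fst (fun ω => mx (fun i => X i ω)),
    integral_fun_snd (fun ω => mx (fun i => Y i ω))] at key
  simp only [probReal_univ, one_smul] at key
  have e : √(((n + 1 : ℕ) : ℝ) * (a ^ (2 * H) / N)) = a ^ H := by
    rw [← hNdef, mul_div_cancel₀ _ hN.ne', mul_comm, Real.rpow_mul ha.le]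
    rw [show ((2 : ℝ)) = ((2 : ℕ) : ℝ) by norm_num, Real.rpow_natCast, Real.sqrt_sq (by positivity)]
  have hbd' : ∫ ω, mx (fun i => Y i ω) ∂Q ≤ √2 * √(((n + 1 : ℕ) : ℝ) * (a ^ (2 * H) / N)) / √π := hbd
  rw [e] at hbd'
  exact key.trans hbd'

lemma IsFBM.bdd (hB : IsFBM P H B) (ω : Ω) : BddAbove ((fun v => B v ω) '' Set.Icc 0 a) :=
  (isCompact_Icc.image (hB.cont ω)).bddAbove

lemma IsFBM.le_sup (hB : IsFBM P H B) (ω : Ω) {t : ℝ} (h0 : 0 ≤ t) (h1 : t ≤ a) :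
    B t ω ≤ fbmSup B a ω :=
  le_csSup (hB.bdd ω) ⟨t, ⟨h0, h1⟩, rfl⟩

lemma IsFBM.tendsto (hB : IsFBM P H B) (ha : 0 < a) (ω : Ω) :
    Tendsto (fun n => gridMax B a n ω) atTop (nhds (fbmSup B a ω)) := by
  obtain ⟨s, hs, hmax⟩ := isCompact_Icc.exists_isMaxOn (nonempty_Icc.2 ha.le) (hB.cont ω).continuousOn
  have hsup : fbmSup B a ω ≤ B s ω := by
    refine csSup_le ((nonempty_Icc.2 ha.le).image _) ?_
    rintro _ ⟨t, ht, rfl⟩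
    exact hmax ht
  have hsup' : fbmSup B a ω = B s ω := le_antisymm hsup (hB.le_sup ω hs.1 hs.2)
  have hr0 : 0 ≤ s / a := div_nonneg hs.1 ha.le
  have hr1 : s / a ≤ 1 := (div_le_one ha).2 hs.2
  have t1 : Tendsto (fun n : ℕ => a * ((⌊s / a * ((n + 1 : ℕ) : ℝ)⌋₊ : ℝ) / ((n + 1 : ℕ) : ℝ)))
      atTop (nhds s) := by
    have h := (tendsto_nat_floor_mul_div_atTop (R := ℝ) hr0).comp
      (tendsto_natCast_atTop_atTop.comp (tendsto_add_atTop_nat 1))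
    have h2 := h.const_mul a
    rw [mul_div_cancel₀ _ ha.ne'] at h2
    exact h2
  have t2 := ((hB.cont ω).tendsto s).comp t1
  rw [← hsup'] at t2
  refine tendsto_of_tendsto_of_tendsto_of_le_of_le t2 tendsto_const_nhds ?_ ?_
  · intro n
    have hN : (0 : ℝ) < ((n + 1 : ℕ) : ℝ) := by positivity
    have hk : ⌊s / a * ((n + 1 : ℕ) : ℝ)⌋₊ < n + 1 + 1 := by
      rw [Nat.lt_succ_iff]
      refine Nat.floor_le_of_le ?_
      nlinarith
    exact le_mx (fun i : Fin (n + 1 + 1) => B (a * ((i : ℝ) / ((n + 1 : ℕ) : ℝ))) ω) ⟨_, hk⟩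
  · intro n
    have hN : (0 : ℝ) < ((n + 1 : ℕ) : ℝ) := by positivity
    refine mx_le _ _ fun i => hB.le_sup ω (by positivity) ?_
    have : (i : ℝ) / ((n + 1 : ℕ) : ℝ) ≤ 1 := by
      rw [div_le_one hN]
      exact_mod_cast Fin.is_le i
    nlinarith

lemma gridMax_nonneg (hB : IsFBM P H B) (n : ℕ) (ω : Ω) : 0 ≤ gridMax B a n ω := by
  have := le_mx (fun i : Fin (n + 1 + 1) => B (a * ((i : ℝ) / ((n + 1 : ℕ) : ℝ))) ω) 0
  unfold gridMax
  refine le_trans (le_of_eq ?_) this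
  simp [hB.zero]

lemma IsFBM.upper (hB : IsFBM P H B) (hH : 1 / 2 ≤ H) (ha : 0 < a) :
    Integrable (fbmSup B a) P ∧ ∫ ω, fbmSup B a ω ∂P ≤ √2 * a ^ H / √π := by
  have hm : ∀ n, Measurable (gridMax B a n) := fun n => measurable_mx fun i => hB.measurable _
  have hi : ∀ n, Integrable (gridMax B a n) P := fun n =>
    integrable_mx (fun i => hB.measurable _) fun i => (hB.cg _).integrable
  have hF : Measurable (fbmSup B a) :=
    measurable_of_tendsto_metrizable hm (tendsto_pi_nhds.2 fun ω => hB.tendsto ha ω)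
  have h0 : ∀ ω, 0 ≤ fbmSup B a ω := fun ω => by
    have := hB.le_sup ω le_rfl ha.le
    rwa [hB.zero] at this
  have hC : 0 ≤ √2 * a ^ H / √π := by positivity
  have key : ∫⁻ ω, ENNReal.ofReal (fbmSup B a ω) ∂P ≤ ENNReal.ofReal (√2 * a ^ H / √π) := by
    have e : ∀ ω, ENNReal.ofReal (fbmSup B a ω)
        = liminf (fun n => ENNReal.ofReal (gridMax B a n ω)) atTop := fun ω =>
      ((ENNReal.continuous_ofReal.tendsto _).comp (hB.tendsto ha ω)).liminf_eq.symm
    simp only [e]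
    refine (lintegral_liminf_le fun n => (hm n).ennreal_ofReal).trans ?_
    refine liminf_le_of_frequently_le' (Eventually.frequently (Eventually.of_forall fun n => ?_))
    rw [← ofReal_integral_eq_lintegral_ofReal (hi n) (ae_of_all _ fun ω => gridMax_nonneg hB n ω)]
    exact ENNReal.ofReal_le_ofReal (hB.gridMax_le hH ha n)
  refine ⟨⟨hF.aestronglyMeasurable, ?_⟩, ?_⟩
  · rw [hasFiniteIntegral_iff_ofReal (ae_of_all _ h0)]
    exact key.trans_lt ENNReal.ofReal_lt_top
  · rw [integral_eq_lintegral_of_nonneg_ae (ae_of_all _ h0) hF.aestronglyMeasurable]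
    exact ENNReal.toReal_le_of_le_ofReal hC key

lemma IsFBM.lower (hB : IsFBM P H B) (hH : 0 < H) (ha : 0 < a) (hI : Integrable (fbmSup B a) P) :
    √2 * a ^ H / (2 * √π) ≤ ∫ ω, fbmSup B a ω ∂P := by
  have hc := hB.cg a
  obtain ⟨hm, v, hv⟩ := hB.cg a
  have h1 := hB.sq hH ha.le
  simp only [← pow_two] at h1
  rw [CG.sq_eq hm hv] at h1
  have h2 : √(v : ℝ) = a ^ H := by
    rw [h1, mul_comm, Real.rpow_mul ha.le, show ((2 : ℝ)) = ((2 : ℕ) : ℝ) by norm_num,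
      Real.rpow_natCast, Real.sqrt_sq (by positivity)]
  have h3 := integral_abs_gaussianReal v
  rw [← hv, integral_map hm.aemeasurable (by fun_prop), h2] at h3
  have h4 : ∫ ω, (B a ω + |B a ω|) / 2 ∂P ≤ ∫ ω, fbmSup B a ω ∂P := by
    refine integral_mono ((hc.integrable.add hc.integrable.abs).div_const 2) hI fun ω => ?_
    have e1 := hB.le_sup ω ha.le le_rfl
    have e2 := hB.le_sup ω le_rfl ha.le
    rw [hB.zero] at e2
    simp only
    rcases abs_cases (B a ω) with h | h <;> linarith
  rw [integral_div, integral_add hc.integrable hc.integrable.abs, hc.integral_eq_zero, h3] at h4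
  refine le_trans (le_of_eq ?_) h4
  have : √π ≠ 0 := by positivity
  field_simp
  ring

end FBM

theorem expected_sup_bounds {Ω : Type*} [MeasurableSpace Ω] (P : Measure Ω)
    [IsProbabilityMeasure P] (H a : ℝ) (B : ℝ → Ω → ℝ)
    (hH : H ∈ Set.Ico (1/2 : ℝ) 1) (ha : 0 < a) (hB : IsFBM P H B) :
    Real.sqrt 2 * a ^ H / (2 * Real.sqrt π) ≤ ∫ ω, fbmSup B a ω ∂P ∧
      ∫ ω, fbmSup B a ω ∂P ≤ Real.sqrt 2 * a ^ H / Real.sqrt π := by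
  have h := hB.upper hH.1 ha
  exact ⟨hB.lower (by linarith [hH.1]) ha h.1, h.2⟩
end

section
/- For the maximum loss $M^{H,-}_a = \sup_{0\le u\le v\le a}(B^H_u - B^H_v)$ of fractional Brownian motion with $H \in [1/2,1)$, the expected value satisfies $\frac{\sqrt{2}\,a^H}{2\sqrt{\pi}} \le E[M^{H,-}_a] \le \frac{2\sqrt{2}\,a^H}{\sqrt{\pi}}$. -/
open MeasureTheory ProbabilityTheory Real Set Filter

/-- Running maximum of a discrete path. -/
noncomputable def dS (b : ℕ → ℝ) : ℕ → ℝ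
  | 0 => b 0
  | k + 1 => max (dS b k) (b (k + 1))

/-- Running maximum loss of a discrete path. -/
noncomputable def dM (b : ℕ → ℝ) : ℕ → ℝ
  | 0 => 0
  | k + 1 => max (dM b k) (dS b (k + 1) - b (k + 1))

lemma dM_nonneg (b : ℕ → ℝ) (k : ℕ) : 0 ≤ dM b k := by
  induction k with
  | zero => simp [dM]
  | succ k ih => exact le_trans ih (le_max_left _ _)

lemma le_dS (b : ℕ → ℝ) (k : ℕ) : b k ≤ dS b k := by
  cases k with
  | zero => simp [dS]
  | succ k => exact le_max_right _ _

lemma Y_le_dM (b : ℕ → ℝ) (k : ℕ) : dS b k - b k ≤ dM b k := by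
  cases k with
  | zero => simp [dS, dM]
  | succ k => exact le_max_right _ _

lemma le_dS' (b : ℕ → ℝ) {i k : ℕ} (h : i ≤ k) : b i ≤ dS b k := by
  induction k, h using Nat.le_induction with
  | base => exact le_dS b i
  | succ k _ ih => exact le_trans ih (le_max_left _ _)

lemma dM_mono (b : ℕ → ℝ) : Monotone (dM b) :=
  monotone_nat_of_le_succ fun _ => le_max_left _ _

lemma le_dM (b : ℕ → ℝ) {i j k : ℕ} (h : i ≤ j) (h' : j ≤ k) : b i - b j ≤ dM b k :=
  le_trans (by linarith [le_dS' b h, Y_le_dM b j]) (dM_mono b h')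

lemma dS_exists (b : ℕ → ℝ) (k : ℕ) : ∃ i ≤ k, dS b k = b i := by
  induction k with
  | zero => exact ⟨0, le_rfl, rfl⟩
  | succ k ih =>
    obtain ⟨i, hi, h⟩ := ih
    rcases max_choice (dS b k) (b (k+1)) with h1 | h1
    · exact ⟨i, by omega, by rw [dS, h1, h]⟩
    · exact ⟨k+1, le_rfl, by rw [dS, h1]⟩

lemma dM_exists (b : ℕ → ℝ) (k : ℕ) : ∃ i j, i ≤ j ∧ j ≤ k ∧ dM b k = b i - b j := by
  induction k with
  | zero => exact ⟨0, 0, le_rfl, le_rfl, by simp [dM]⟩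
  | succ k ih =>
    obtain ⟨i, j, hi, hj, h⟩ := ih
    rcases max_choice (dM b k) (dS b (k+1) - b (k+1)) with h1 | h1
    · exact ⟨i, j, hi, by omega, by rw [dM, h1, h]⟩
    · obtain ⟨i, hi, h⟩ := dS_exists b (k+1)
      exact ⟨i, k+1, hi, le_rfl, by rw [dM, h1, h]⟩

/-- Monotonicity of the functionals in the increments. -/
lemma d_compare (b b' : ℕ → ℝ) (k : ℕ) (h0 : b 0 = b' 0)
    (h : ∀ i < k, b (i+1) - b i ≤ b' (i+1) - b' i) :
    b k ≤ b' k ∧ dS b k ≤ dS b' k ∧ dS b' k - b' k ≤ dS b k - b k ∧ dM b' k ≤ dM b k := by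
  induction k with
  | zero => simp [dS, dM, h0]
  | succ k ih =>
    obtain ⟨i1, i2, i3, i4⟩ := ih fun i hi => h i (by omega)
    have hk := h k (by omega)
    have e1 : b (k+1) ≤ b' (k+1) := by linarith
    have e3 : dS b' (k+1) - b' (k+1) ≤ dS b (k+1) - b (k+1) := by
      simp only [dS]
      have := le_max_left (dS b k) (b (k+1))
      have := le_max_right (dS b k) (b (k+1))
      rcases max_choice (dS b' k) (b' (k+1)) with h1 | h1 <;> rw [h1] <;> linarith
    exact ⟨e1, max_le_max i2 e1, e3, max_le_max i4 e3⟩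

/-- The running weight appearing in the discrete stochastic integral. -/
noncomputable def dF (d : ℝ) (b : ℕ → ℝ) (k : ℕ) : ℝ := max (dM b k) d - d - dS b k

lemma dF_compare (d : ℝ) (b b' : ℕ → ℝ) (k : ℕ) (h0 : b 0 = b' 0)
    (h : ∀ i < k, b (i+1) - b i ≤ b' (i+1) - b' i) : dF d b' k ≤ dF d b k := by
  obtain ⟨_, h2, _, h4⟩ := d_compare b b' k h0 h
  have := max_le_max h4 (le_refl d)
  unfold dF
  linarith

lemma d_pathwise1 (b : ℕ → ℝ) (h0 : b 0 = 0) (k : ℕ) :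
    dS b k ^ 2 - 2 * dS b k * b k ≤ - 2 * ∑ i ∈ Finset.range k, (b (i+1) - b i) * dS b i := by
  induction k with
  | zero => simp [dS, h0]
  | succ k ih =>
    rw [Finset.sum_range_succ]
    simp only [dS]
    rcases max_choice (dS b k) (b (k+1)) with h1 | h1 <;> rw [h1]
    · nlinarith
    · nlinarith [sq_nonneg (b (k+1) - dS b k)]

lemma d_pathwise2 (b : ℕ → ℝ) (h0 : b 0 = 0) (c d : ℝ) (hc : 0 < c) (hd : 0 < d)
    (hcd : 2 * c * d = 1) (k : ℕ) :
    max (dM b k) d + c * (max (dM b k) d - d) ^ 2 - 2 * c * (max (dM b k) d - d) * (dS b k - b k)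
      ≤ d + 2 * c * ∑ i ∈ Finset.range k, (b (i+1) - b i) * (max (dM b i) d - d) := by
  induction k with
  | zero => simp [dS, dM, h0, hd.le]
  | succ k ih =>
    rw [Finset.sum_range_succ]
    have hY : dS b k - b (k+1) ≤ dS b (k+1) - b (k+1) := by
      have : dS b k ≤ dS b (k+1) := le_max_left _ _
      linarith
    have hm : dM b (k+1) = max (dM b k) (dS b (k+1) - b (k+1)) := rfl
    have hS : dS b (k+1) = max (dS b k) (b (k+1)) := rfl
    have hnn := dM_nonneg b k
    set X := b (k+1) - b k with hX
    set Y := dS b k - b k with hYd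
    set Y' := dS b (k+1) - b (k+1) with hYd'
    set μ := max (dM b k) d with hμ
    have hμd : d ≤ μ := le_max_right _ _
    have hYX : Y - X ≤ Y' := by simp only [hX, hYd]; linarith
    by_cases hle : Y' ≤ μ
    · have hmm : max (dM b (k+1)) d = μ := by
        rw [hm, hμ]
        apply le_antisymm
        · exact max_le (max_le (le_max_left _ _) hle) (le_max_right _ _)
        · exact max_le_max (le_max_left _ _) le_rfl
      rw [hmm]
      nlinarith [mul_nonneg (mul_nonneg hc.le (sub_nonneg.2 hμd)) (sub_nonneg.2 hYX)]
    · push Not at hle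
      have hmm : max (dM b (k+1)) d = Y' := by
        rw [hm, max_eq_right (le_trans (le_max_left _ _) hle.le), max_eq_left (by linarith)]
      rw [hmm]
      nlinarith [mul_nonneg (mul_nonneg hc.le (sub_nonneg.2 hμd)) (sub_nonneg.2 hYX),
        mul_nonneg hc.le (sq_nonneg (Y' - μ)), hcd]

lemma d_pathwise (b : ℕ → ℝ) (h0 : b 0 = 0) (c d : ℝ) (hc : 0 < c) (hd : 0 < d)
    (hcd : 2 * c * d = 1) (k : ℕ) :
    dM b k ≤ d + c * b k ^ 2 + 2 * c * ∑ i ∈ Finset.range k, (b (i+1) - b i) * dF d b i := by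
  have h1 := d_pathwise1 b h0 k
  have h2 := d_pathwise2 b h0 c d hc hd hcd k
  have h3 : ∑ i ∈ Finset.range k, (b (i+1) - b i) * dF d b i =
      ∑ i ∈ Finset.range k, (b (i+1) - b i) * (max (dM b i) d - d) -
      ∑ i ∈ Finset.range k, (b (i+1) - b i) * dS b i := by
    rw [← Finset.sum_sub_distrib]
    exact Finset.sum_congr rfl fun i _ => by unfold dF; ring
  rw [h3]
  have h4 := le_max_left (dM b k) d
  have h5 := mul_le_mul_of_nonneg_left h1 hc.le
  nlinarith [mul_nonneg hc.le (sq_nonneg (max (dM b k) d - d - (dS b k - b k)))]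

lemma measurable_dS (k : ℕ) : Measurable fun b : ℕ → ℝ => dS b k := by
  induction k with
  | zero => exact measurable_pi_apply 0
  | succ k ih => exact ih.max (measurable_pi_apply (k+1))

lemma measurable_dM (k : ℕ) : Measurable fun b : ℕ → ℝ => dM b k := by
  induction k with
  | zero => exact measurable_const
  | succ k ih => exact ih.max ((measurable_dS (k+1)).sub (measurable_pi_apply (k+1)))

lemma measurable_dF (d : ℝ) (k : ℕ) : Measurable fun b : ℕ → ℝ => dF d b k :=
  (((measurable_dM k).max measurable_const).sub measurable_const).sub (measurable_dS k)

lemma memLp_dS {Ω : Type*} [MeasurableSpace Ω] {P : Measure Ω} {b : Ω → ℕ → ℝ}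
    (hb : ∀ i, MemLp (fun ω => b ω i) 2 P) (k : ℕ) : MemLp (fun ω => dS (b ω) k) 2 P := by
  induction k with
  | zero => exact hb 0
  | succ k ih => exact ih.sup (hb (k+1))

lemma memLp_dM {Ω : Type*} [MeasurableSpace Ω] {P : Measure Ω} {b : Ω → ℕ → ℝ}
    (hb : ∀ i, MemLp (fun ω => b ω i) 2 P) (k : ℕ) : MemLp (fun ω => dM (b ω) k) 2 P := by
  induction k with
  | zero => exact MemLp.zero
  | succ k ih => exact ih.sup ((memLp_dS hb (k+1)).sub (hb (k+1)))

lemma memLp_dF {Ω : Type*} [MeasurableSpace Ω] {P : Measure Ω} [IsProbabilityMeasure P]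
    {b : Ω → ℕ → ℝ} (d : ℝ)
    (hb : ∀ i, MemLp (fun ω => b ω i) 2 P) (k : ℕ) : MemLp (fun ω => dF d (b ω) k) 2 P :=
  (((memLp_dM hb k).sup (memLp_const d)).sub (memLp_const d)).sub (memLp_dS hb k)

lemma gauss_law {Ω : Type*} [MeasurableSpace Ω] {P : Measure Ω} {X : Ω → ℝ} (hX : Measurable X)
    {v : NNReal} (h : P.map X = gaussianReal 0 v) :
    MemLp X 2 P ∧ ∫ ω, X ω ∂P = 0 ∧ ∫ ω, X ω ^ 2 ∂P = v := by
  have h1 : MemLp id 2 (P.map X) := by rw [h]; exact memLp_id_gaussianReal 2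
  refine ⟨(memLp_map_measure_iff (by fun_prop) hX.aemeasurable).1 h1, ?_, ?_⟩
  · have : ∫ x, x ∂(P.map X) = ∫ ω, X ω ∂P := integral_map hX.aemeasurable (by fun_prop)
    rw [← this, h, integral_id_gaussianReal]
  · have : ∫ x, x ^ 2 ∂(P.map X) = ∫ ω, X ω ^ 2 ∂P := integral_map hX.aemeasurable (by fun_prop)
    rw [← this, h]
    have h3 := variance_fun_id_gaussianReal (μ := 0) (v := v)
    rw [variance_eq_integral (by fun_prop)] at h3
    simpa using h3

lemma gauss_reflect {Ω : Type*} [MeasurableSpace Ω] {P : Measure Ω} [IsProbabilityMeasure P]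
    {N : ℕ} (X : Fin N → Ω → ℝ) (hX : ∀ i, Measurable (X i))
    (hG : ∀ c : Fin N → ℝ, ∃ v : NNReal, P.map (fun ω => ∑ i, c i * X i ω) = gaussianReal 0 v)
    (w c : Fin N → ℝ)
    (hc : ∀ i, ∫ ω, X i ω * (∑ j, w j * X j ω) ∂P = c i * ∫ ω, (∑ j, w j * X j ω) ^ 2 ∂P) :
    P.map (fun ω i => X i ω) = P.map (fun ω i => X i ω - 2 * c i * ∑ j, w j * X j ω) := by
  have hL2 : ∀ i, MemLp (X i) 2 P := by
    intro i
    obtain ⟨v, hv⟩ := hG (Pi.single i 1)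
    have : (fun ω => ∑ j, (Pi.single i 1 : Fin N → ℝ) j * X j ω) = X i := by
      ext ω; simp [Pi.single_apply]
    rw [this] at hv
    exact (gauss_law (hX i) hv).1
  set Z : Ω → ℝ := fun ω => ∑ j, w j * X j ω with hZ
  have hZm : Measurable Z := by fun_prop
  have hZ2 : MemLp Z 2 P := memLp_finsetSum _ fun j _ => (hL2 j).const_mul (w j)
  have hm1 : Measurable (fun ω i => X i ω) := by fun_prop
  have hm2 : Measurable (fun ω i => X i ω - 2 * c i * Z ω) := by fun_prop
  have : IsProbabilityMeasure (P.map (fun ω i => X i ω)) :=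
    Measure.isProbabilityMeasure_map hm1.aemeasurable
  have : IsProbabilityMeasure (P.map (fun ω i => X i ω - 2 * c i * Z ω)) :=
    Measure.isProbabilityMeasure_map hm2.aemeasurable
  apply Measure.ext_of_charFunDual
  ext L
  rw [charFunDual_eq_charFun_map_one, charFunDual_eq_charFun_map_one]
  congr 1
  rw [Measure.map_map (by fun_prop) hm1, Measure.map_map (by fun_prop) hm2]
  set t : Fin N → ℝ := fun i => L (Pi.single i 1) with ht
  have hL : ∀ x, L x = ∑ i, t i * x i := by
    intro x
    conv_lhs => rw [← Finset.univ_sum_single x]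
    rw [map_sum]
    refine Finset.sum_congr rfl fun i _ => ?_
    have : Pi.single i (x i) = x i • (Pi.single i 1 : Fin N → ℝ) := by
      rw [← Pi.single_smul]; simp
    rw [this, map_smul, smul_eq_mul, mul_comm]
  set q := ∑ i, t i * c i with hq
  set U : Ω → ℝ := fun ω => ∑ i, t i * X i ω with hU
  have hUm : Measurable U := by fun_prop
  have hU2 : MemLp U 2 P := memLp_finsetSum _ fun j _ => (hL2 j).const_mul (t j)
  have e1 : (⇑L ∘ fun ω i => X i ω) = U := by ext ω; simp [hL, hU]
  have e2 : (⇑L ∘ fun ω i => X i ω - 2 * c i * Z ω) = fun ω => U ω - 2 * q * Z ω := by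
    ext ω
    simp only [Function.comp, hL, hU, hq, Finset.mul_sum, Finset.sum_mul, ← Finset.sum_sub_distrib]
    refine Finset.sum_congr rfl fun i _ => by ring
  rw [e1, e2]
  obtain ⟨v, hv⟩ := hG t
  obtain ⟨v', hv'⟩ := hG (fun i => t i - 2 * q * w i)
  have e3 : (fun ω => ∑ i, (t i - 2 * q * w i) * X i ω) = fun ω => U ω - 2 * q * Z ω := by
    ext ω
    simp only [hU, hZ, Finset.mul_sum, ← Finset.sum_sub_distrib]
    refine Finset.sum_congr rfl fun i _ => by ring
  rw [e3] at hv'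
  have h1 := (gauss_law hUm hv).2.2
  have h2 := (gauss_law (by fun_prop) hv').2.2
  have hUZ : ∫ ω, U ω * Z ω ∂P = q * ∫ ω, Z ω ^ 2 ∂P := by
    simp only [hU, Finset.sum_mul]
    rw [integral_finsetSum]
    · rw [hq, Finset.sum_mul]
      refine Finset.sum_congr rfl fun i _ => ?_
      simp only [mul_assoc]
      rw [integral_const_mul, hc i]
    · intro i _
      exact ((hL2 i).const_mul (t i)).integrable_mul hZ2
  have h3 : ∫ ω, (U ω - 2 * q * Z ω) ^ 2 ∂P = ∫ ω, U ω ^ 2 ∂P := by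
    have : ∀ ω, (U ω - 2 * q * Z ω) ^ 2 = U ω ^ 2 - 4 * q * (U ω * Z ω) + 4 * q ^ 2 * Z ω ^ 2 := by
      intro ω; ring
    simp only [this]
    rw [integral_add, integral_sub, integral_const_mul, integral_const_mul, hUZ]
    · ring
    · exact hU2.integrable_sq
    · exact (hU2.integrable_mul hZ2).const_mul _
    · exact hU2.integrable_sq.sub ((hU2.integrable_mul hZ2).const_mul _)
    · exact hZ2.integrable_sq.const_mul _
  have : v = v' := by
    apply NNReal.coe_injective
    rw [← h1, ← h2, h3]
  change P.map U = _
  rw [show P.map U = gaussianReal 0 v from hv, hv', this]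

lemma gauss_abs {s : ℝ} (hs : 0 < s) :
    ∫ x, |x| ∂(gaussianReal 0 (⟨s ^ 2, sq_nonneg s⟩ : NNReal)) = s * √2 / √π := by
  set v : NNReal := ⟨s ^ 2, sq_nonneg s⟩ with hvd
  have hvc : (v : ℝ) = s ^ 2 := rfl
  have hv : v ≠ 0 := by
    intro h
    have : (v : ℝ) = 0 := by rw [h]; rfl
    rw [hvc] at this
    exact absurd this (by positivity)
  rw [integral_gaussianReal_eq_integral_smul hv]
  have : ∀ x, gaussianPDFReal 0 v x • |x| =
      (fun y => (√(2 * π * v))⁻¹ * (y ^ (1 : ℝ) * rexp (-(1 / (2 * v)) * y ^ (2 : ℝ)))) |x| := by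
    intro x
    simp only [gaussianPDFReal, smul_eq_mul, rpow_one, rpow_two, sq_abs, sub_zero]
    rw [show -x ^ 2 / (2 * (v:ℝ)) = -(1 / (2 * v)) * x ^ 2 by ring]
    ring
  refine (integral_congr_ae (ae_of_all _ this)).trans ?_
  rw [integral_comp_abs (f := fun y => (√(2 * π * v))⁻¹ *
    (y ^ (1 : ℝ) * rexp (-(1 / (2 * v)) * y ^ (2 : ℝ)))), integral_const_mul,
    integral_rpow_mul_exp_neg_mul_rpow (by norm_num) (by norm_num) (by rw [hvc]; positivity)]
  norm_num
  rw [hvc, rpow_neg_one, sqrt_sq hs.le]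
  have h2 : √2 * √2 = 2 := mul_self_sqrt (by norm_num)
  have h2' : √2 ≠ 0 := by positivity
  have hp : √π ≠ 0 := by positivity
  field_simp
  try nlinarith

section fbm
variable {Ω : Type*} [MeasurableSpace Ω] {P : Measure Ω} [IsProbabilityMeasure P] {H : ℝ}
  {B : ℝ → Ω → ℝ}

lemma fbm_memLp (hB : IsFBM P H B) (t : ℝ) : MemLp (B t) 2 P := by
  obtain ⟨v, hv⟩ := hB.gaussian 1 (fun _ => t) (fun _ => 1)
  have : (fun ω => ∑ i : Fin 1, (1 : ℝ) * B t ω) = B t := by ext ω; simp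
  rw [this] at hv
  exact (gauss_law (hB.measurable t) hv).1

lemma fbm_cov_inc (hB : IsFBM P H B) {s t u v : ℝ} (hs : 0 ≤ s) (ht : 0 ≤ t) (hu : 0 ≤ u)
    (hv : 0 ≤ v) :
    ∫ ω, (B t ω - B s ω) * (B v ω - B u ω) ∂P =
      (|v - s| ^ (2*H) + |u - t| ^ (2*H) - |v - t| ^ (2*H) - |u - s| ^ (2*H)) / 2 := by
  have hi : ∀ x y, Integrable (fun ω => B x ω * B y ω) P := fun x y =>
    (fbm_memLp hB x).integrable_mul (fbm_memLp hB y)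
  have : ∀ ω, (B t ω - B s ω) * (B v ω - B u ω) =
      B t ω * B v ω - B t ω * B u ω - (B s ω * B v ω - B s ω * B u ω) := fun ω => by ring
  simp only [this]
  have hi2 : ∀ x y z, Integrable (fun ω => B x ω * B y ω - B x ω * B z ω) P := fun x y z =>
    (hi x y).sub (hi x z)
  rw [integral_sub (hi2 _ _ _) (hi2 _ _ _), integral_sub (hi _ _) (hi _ _),
    integral_sub (hi _ _) (hi _ _), hB.cov _ _ ht hv, hB.cov _ _ ht hu, hB.cov _ _ hs hv,
    hB.cov _ _ hs hu]
  ring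

lemma fbm_grid_cov (hB : IsFBM P H B) (hH : 1/2 ≤ H) {δ : ℝ} (hδ : 0 < δ) {i k : ℕ} (hik : i < k) :
    0 ≤ ∫ ω, (B ((i+1 : ℕ) * δ) ω - B (i * δ) ω) * (B ((k+1 : ℕ) * δ) ω - B (k * δ) ω) ∂P := by
  rw [fbm_cov_inc hB (by positivity) (by positivity) (by positivity) (by positivity)]
  obtain ⟨j, rfl⟩ := Nat.exists_eq_add_of_lt hik
  set x : ℝ := (j + 1) * δ with hx
  have hxd : 0 ≤ x - δ := by rw [hx]; nlinarith [mul_nonneg (Nat.cast_nonneg (α := ℝ) j) hδ.le]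
  have a1 : ((i + j + 1 + 1 : ℕ) : ℝ) * δ - i * δ = x + δ := by rw [hx]; push_cast; ring
  have a2 : ((i + j + 1 : ℕ) : ℝ) * δ - (i + 1 : ℕ) * δ = x - δ := by rw [hx]; push_cast; ring
  have a3 : ((i + j + 1 + 1 : ℕ) : ℝ) * δ - (i + 1 : ℕ) * δ = x := by rw [hx]; push_cast; ring
  have a4 : ((i + j + 1 : ℕ) : ℝ) * δ - i * δ = x := by rw [hx]; push_cast; ring
  rw [a1, a2, a3, a4, abs_of_nonneg hxd, abs_of_nonneg (by linarith : 0 ≤ x + δ),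
    abs_of_nonneg (by linarith : 0 ≤ x)]
  have hconv := (convexOn_rpow (by linarith : 1 ≤ 2 * H)).2
    (show x + δ ∈ Ici 0 by simp only [mem_Ici]; linarith) (show x - δ ∈ Ici 0 from hxd) 
    (by norm_num : (0:ℝ) ≤ 1/2) (by norm_num : (0:ℝ) ≤ 1/2) (by norm_num)
  simp only [smul_eq_mul] at hconv
  rw [show (1:ℝ)/2 * (x + δ) + 1/2 * (x - δ) = x by ring] at hconv
  linarith

lemma dF_congr (d : ℝ) (b b' : ℕ → ℝ) (k : ℕ) (h : ∀ i ≤ k, b i = b' i) :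
    dF d b k = dF d b' k := by
  apply le_antisymm <;> apply dF_compare
  · exact (h 0 (by omega)).symm
  · intro i hi; rw [h i (by omega), h (i+1) (by omega)]
  · exact h 0 (by omega)
  · intro i hi; rw [h i (by omega), h (i+1) (by omega)]

lemma fbm_demi (hB : IsFBM P H B) (hH : 1/2 ≤ H) {δ : ℝ} (hδ : 0 < δ) (d : ℝ) (k : ℕ) :
    ∫ ω, (B ((k+1 : ℕ) * δ) ω - B (k * δ) ω) * dF d (fun i => B (i * δ) ω) k ∂P ≤ 0 := by
  set b : Ω → ℕ → ℝ := fun ω i => B (i * δ) ω with hb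
  have hbm : ∀ i, Measurable fun ω => b ω i := fun i => hB.measurable _
  have hbL : ∀ i, MemLp (fun ω => b ω i) 2 P := fun i => fbm_memLp hB _
  set Z : Ω → ℝ := fun ω => b ω (k+1) - b ω k with hZ
  have hZL : MemLp Z 2 P := (hbL (k+1)).sub (hbL k)
  have hZm : Measurable Z := (hbm (k+1)).sub (hbm k)
  have hZ2 : 0 < ∫ ω, Z ω ^ 2 ∂P := by
    have := fbm_cov_inc hB (s := k * δ) (t := (k+1 : ℕ) * δ) (u := k * δ) (v := (k+1 : ℕ) * δ)
      (by positivity) (by positivity) (by positivity) (by positivity)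
    have h2 : ∫ ω, Z ω ^ 2 ∂P = δ ^ (2*H) := by
      simp only [sq]
      rw [show (∫ ω, Z ω * Z ω ∂P) = _ from this, abs_sub_comm ((k:ℝ) * δ)]
      have : ((k+1 : ℕ) : ℝ) * δ - k * δ = δ := by push_cast; ring
      rw [this, sub_self, sub_self, abs_zero, zero_rpow (by linarith), abs_of_pos hδ]
      ring
    rw [h2]; positivity
  set V := ∫ ω, Z ω ^ 2 ∂P with hV
  set C : ℕ → ℝ := fun i => (∫ ω, b ω i * Z ω ∂P) / V with hC
  have hCdiff : ∀ i j, C i - C j = (∫ ω, (b ω i - b ω j) * Z ω ∂P) / V := by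
    intro i j
    simp only [hC, sub_mul]
    have hI : ∀ i, Integrable (fun ω => b ω i * Z ω) P := fun i => (hbL i).integrable_mul hZL
    rw [integral_sub (hI i) (hI j)]
    ring
  have hC1 : C (k+1) - C k = 1 := by
    rw [hCdiff, div_eq_one_iff_eq hZ2.ne']
    simp only [hV, sq]; rfl
  have hC0 : C 0 = 0 := by simp [hC, hb, hB.zero]
  have hCi : ∀ i < k, 0 ≤ C (i+1) - C i := by
    intro i hi
    rw [hCdiff]
    exact div_nonneg (fbm_grid_cov hB hH hδ hi) hZ2.le
  set b' : Ω → ℕ → ℝ := fun ω i => b ω i - 2 * C i * Z ω with hb'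
  have hb'L : ∀ i, MemLp (fun ω => b' ω i) 2 P := fun i => (hbL i).sub (hZL.const_mul _)
  have key : ∫ ω, Z ω * dF d (b ω) k ∂P = ∫ ω, (b' ω (k+1) - b' ω k) * dF d (b' ω) k ∂P := by
    let w : Fin (k+2) → ℝ := fun j => if (j : ℕ) = k+1 then 1 else if (j : ℕ) = k then -1 else 0
    have hw : ∀ ω, ∑ j : Fin (k+2), w j * b ω j = Z ω := by
      intro ω
      rw [Fin.sum_univ_castSucc, Fin.sum_univ_castSucc]
      have : ∑ i : Fin k, w i.castSucc.castSucc * b ω (i.castSucc.castSucc : Fin (k+2)) = 0 := by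
        apply Finset.sum_eq_zero
        intro i _
        have := i.2
        simp only [w, Fin.val_castSucc]
        rw [if_neg (by omega), if_neg (by omega), zero_mul]
      rw [this]
      simp [w, hZ]
      ring
    have hlaw := gauss_reflect (P := P) (fun (i : Fin (k+2)) ω => b ω i) (fun i => hbm i)
      (fun c => hB.gaussian (k+2) (fun i => (i : ℕ) * δ) c) w (fun i => C i) (by
        intro i
        simp only [hw]
        rw [← hV]
        simp only [hC]
        field_simp)
    simp only [hw] at hlaw
    let ext : (Fin (k+2) → ℝ) → ℕ → ℝ := fun x i => x (Fin.ofNat (k+2) i)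
    have hext : Measurable ext := by
      apply measurable_pi_lambda
      intro i
      exact measurable_pi_apply _
    let Φ : (Fin (k+2) → ℝ) → ℝ := fun x => (ext x (k+1) - ext x k) * dF d (ext x) k
    have hΦ : Measurable Φ :=
      (((measurable_pi_apply _).comp hext).sub ((measurable_pi_apply _).comp hext)).mul
        ((measurable_dF d k).comp hext)
    have hval : ∀ (β : ℕ → ℝ), Φ (fun i => β i) = (β (k+1) - β k) * dF d β k := by
      intro β
      have he : ∀ i ≤ k+1, ext (fun i => β i) i = β i := by
        intro i hi
        simp only [ext, Fin.val_ofNat]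
        rw [Nat.mod_eq_of_lt (by omega)]
      simp only [Φ]
      rw [he _ le_rfl, he _ (by omega), dF_congr d _ β k fun i hi => he i (by omega)]
    have i1 : ∫ x, Φ x ∂(P.map fun ω (i : Fin (k+2)) => b ω i) = ∫ ω, Φ (fun i => b ω i) ∂P :=
      integral_map (measurable_pi_lambda (fun ω (i : Fin (k+2)) => b ω i) fun i => hbm i).aemeasurable hΦ.aestronglyMeasurable
    have i2 : ∫ x, Φ x ∂(P.map fun ω (i : Fin (k+2)) => b' ω i) = ∫ ω, Φ (fun i => b' ω i) ∂P :=
      integral_map (measurable_pi_lambda (fun ω (i : Fin (k+2)) => b' ω i) fun i =>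
        (hbm i).sub (hZm.const_mul _)).aemeasurable hΦ.aestronglyMeasurable
    have i3 : ∫ ω, Φ (fun i => b ω i) ∂P = ∫ ω, Φ (fun i => b' ω i) ∂P := by
      rw [← i1, ← i2]
      exact congrArg (fun μ => ∫ x, Φ x ∂μ) hlaw
    simp only [hval] at i3
    exact i3
  have hb'Z : ∀ ω, b' ω (k+1) - b' ω k = - Z ω := by
    intro ω
    have : b' ω (k+1) - b' ω k = Z ω - 2 * (C (k+1) - C k) * Z ω := by
      simp only [hb', hZ]; ring
    rw [this, hC1]; ring
  simp only [hb'Z] at key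
  have j1 : Integrable (fun ω => Z ω * dF d (b ω) k) P := hZL.integrable_mul (memLp_dF d hbL k)
  have j2 : Integrable (fun ω => -Z ω * dF d (b' ω) k) P :=
    hZL.neg.integrable_mul (memLp_dF d hb'L k)
  have hsum : ∫ ω, (Z ω * dF d (b ω) k + -Z ω * dF d (b' ω) k) ∂P ≤ 0 := by
    apply integral_nonpos
    intro ω
    have hinc : ∀ i, b' ω (i+1) - b' ω i = b ω (i+1) - b ω i - 2 * ((C (i+1) - C i) * Z ω) := by
      intro i; simp only [hb']; ring
    have h0 : b' ω 0 = b ω 0 := by simp [hb', hC0]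
    change Z ω * dF d (b ω) k + -Z ω * dF d (b' ω) k ≤ 0
    rcases le_total 0 (Z ω) with hz | hz
    · have := dF_compare d (b' ω) (b ω) k h0 (by
        intro i hi
        rw [hinc]; nlinarith [mul_nonneg (hCi i hi) hz])
      nlinarith
    · have := dF_compare d (b ω) (b' ω) k h0.symm (by
        intro i hi
        rw [hinc]; nlinarith [mul_nonneg (hCi i hi) (neg_nonneg.2 hz)])
      nlinarith
  rw [integral_add j1 j2, ← key] at hsum
  change ∫ ω, Z ω * dF d (b ω) k ∂P ≤ 0
  linarith

lemma fbm_discrete (hB : IsFBM P H B) (hH : 1/2 ≤ H) {δ : ℝ} (hδ : 0 < δ) (n : ℕ) (hn : 0 < n) :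
    Integrable (fun ω => dM (fun i => B (i * δ) ω) n) P ∧
    ∫ ω, dM (fun i => B (i * δ) ω) n ∂P ≤ √2 * (n * δ) ^ H := by
  have hbL : ∀ i : ℕ, MemLp (fun ω => B (i * δ) ω) 2 P := fun i => fbm_memLp hB _
  have hMint : Integrable (fun ω => dM (fun i => B (i * δ) ω) n) P :=
    (memLp_dM hbL n).integrable (by norm_num)
  refine ⟨hMint, ?_⟩
  set a : ℝ := n * δ with ha
  have hapos : 0 < a := by positivity
  have h2 : √2 * √2 = 2 := mul_self_sqrt (by norm_num)
  have h2' : 0 < √2 := by positivity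
  set A := a ^ H with hA
  have hApos : 0 < A := rpow_pos_of_pos hapos H
  set d := A * √2 / 2 with hd
  set c := √2 / (2 * A) with hc
  have hcd : 2 * c * d = 1 := by
    rw [hc, hd]; field_simp; linarith
  have hvar : ∫ ω, B a ω ^ 2 ∂P = A ^ 2 := by
    simp only [sq]
    rw [hB.cov a a hapos.le hapos.le, sub_self, abs_zero, zero_rpow (by linarith), hA,
      ← rpow_add hapos, ← two_mul]
    ring
  have hF : ∀ k : ℕ, Integrable (fun ω =>
      (B ((k+1 : ℕ) * δ) ω - B (k * δ) ω) * dF d (fun i => B (i * δ) ω) k) P := fun k =>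
    ((hbL (k+1)).sub (hbL k)).integrable_mul (memLp_dF d hbL k)
  have hsumI := integrable_finsetSum (Finset.range n) fun k _ => hF k
  have hB2 : Integrable (fun ω => B a ω ^ 2) P := (fbm_memLp hB a).integrable_sq
  have hle : ∫ ω, dM (fun i => B (i * δ) ω) n ∂P ≤ ∫ ω, (d + c * B a ω ^ 2 + 2 * c *
      ∑ k ∈ Finset.range n, (B ((k+1 : ℕ) * δ) ω - B (k * δ) ω) * dF d (fun i => B (i * δ) ω) k) ∂P := by
    apply integral_mono hMint
    · exact ((integrable_const d).add (hB2.const_mul c)).add (hsumI.const_mul _)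
    · intro ω
      exact d_pathwise (fun i => B (i * δ) ω) (by simp [hB.zero]) c d (by positivity)
        (by positivity) hcd n
  have hI : Integrable (fun ω => d + c * B a ω ^ 2) P :=
    (integrable_const d).add (hB2.const_mul c)
  rw [integral_add hI (hsumI.const_mul _),
    integral_add (integrable_const d) (hB2.const_mul c), integral_const_mul, integral_const_mul,
    integral_finsetSum _ (fun k _ => hF k), hvar] at hle
  have hs := Finset.sum_nonpos fun k (_ : k ∈ Finset.range n) => fbm_demi hB hH hδ d k
  have hcpos : 0 < 2 * c := by positivity
  have hs' := mul_nonpos_of_nonneg_of_nonpos hcpos.le hs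
  have hfin : d + c * A ^ 2 = √2 * A := by rw [hd, hc]; field_simp; ring
  simp only [integral_const, probReal_univ, smul_eq_mul, one_mul] at hle
  linarith

lemma maxLoss_bdd (hB : IsFBM P H B) (a : ℝ) (ω : Ω) :
    BddAbove {x | ∃ u v : ℝ, 0 ≤ u ∧ u ≤ v ∧ v ≤ a ∧ x = B u ω - B v ω} := by
  obtain ⟨K, hK⟩ := (isCompact_Icc (a := (0:ℝ)) (b := a)).exists_bound_of_continuousOn
    (hB.cont ω).continuousOn
  refine ⟨2 * K, ?_⟩
  rintro x ⟨u, v, hu, huv, hv, rfl⟩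
  have h1 := abs_le.1 (hK u ⟨hu, huv.trans hv⟩)
  have h2 := abs_le.1 (hK v ⟨hu.trans huv, hv⟩)
  linarith [h1.2, h2.1]

lemma maxLoss_tendsto (hB : IsFBM P H B) {a : ℝ} (ha : 0 < a) (ω : Ω) :
    Tendsto (fun n : ℕ => dM (fun i => B (i * (a / (n+1 : ℕ))) ω) (n+1)) atTop
      (nhds (fbmMaxLoss B a ω)) := by
  have hbdd := maxLoss_bdd hB a ω
  rw [tendsto_order]
  constructor
  · intro x hx
    have hne : {x | ∃ u v : ℝ, 0 ≤ u ∧ u ≤ v ∧ v ≤ a ∧ x = B u ω - B v ω}.Nonempty :=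
      ⟨_, 0, 0, le_rfl, le_rfl, ha.le, rfl⟩
    obtain ⟨_, ⟨u, v, hu, huv, hv, rfl⟩, hlt⟩ := exists_lt_of_lt_csSup hne hx
    have happ : ∀ t : ℝ, 0 ≤ t → Tendsto (fun n : ℕ =>
        B ((⌊t / a * ((n+1 : ℕ) : ℝ)⌋₊ : ℝ) * (a / (n+1 : ℕ))) ω) atTop (nhds (B t ω)) := by
      intro t ht
      have h1 := (tendsto_nat_floor_mul_div_atTop (R := ℝ) (a := t / a) (by positivity)).comp
        ((tendsto_natCast_atTop_atTop (R := ℝ)).comp (tendsto_add_atTop_nat 1))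
      have h2 := h1.mul_const a
      rw [div_mul_cancel₀ _ ha.ne'] at h2
      refine ((hB.cont ω).tendsto t).comp (h2.congr fun n => ?_)
      simp only [Function.comp]
      ring
    have hlim := (happ u hu).sub (happ v (hu.trans huv))
    filter_upwards [hlim.eventually_const_lt hlt] with n hn
    refine lt_of_lt_of_le hn (le_dM (fun i => B (i * (a / (n+1 : ℕ))) ω) ?_ ?_)
    · apply Nat.floor_mono
      gcongr
    · apply Nat.floor_le_of_le
      have : v / a ≤ 1 := (div_le_one ha).2 hv
      exact mul_le_of_le_one_left (by positivity) this
  · intro x hx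
    refine Eventually.of_forall fun n => lt_of_le_of_lt ?_ hx
    obtain ⟨i, j, hij, hj, h⟩ := dM_exists (fun i => B (i * (a / (n+1 : ℕ))) ω) (n+1)
    rw [h]
    apply le_csSup hbdd
    refine ⟨_, _, by positivity, ?_, ?_, rfl⟩
    · gcongr
    · have : (j : ℝ) ≤ (n+1 : ℕ) := by exact_mod_cast hj
      calc (j : ℝ) * (a / (n+1 : ℕ)) ≤ (n+1 : ℕ) * (a / (n+1 : ℕ)) := by gcongr
        _ = a := by field_simp

lemma maxLoss_ge (hB : IsFBM P H B) {a : ℝ} (ω : Ω) {u v : ℝ} (hu : 0 ≤ u)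
    (huv : u ≤ v) (hv : v ≤ a) : B u ω - B v ω ≤ fbmMaxLoss B a ω :=
  le_csSup (maxLoss_bdd hB a ω) ⟨u, v, hu, huv, hv, rfl⟩

lemma maxLoss_upper (hB : IsFBM P H B) (hH : 1/2 ≤ H) {a : ℝ} (ha : 0 < a) :
    Integrable (fbmMaxLoss B a) P ∧ ∫ ω, fbmMaxLoss B a ω ∂P ≤ √2 * a ^ H := by
  set Mn : ℕ → Ω → ℝ := fun n ω => dM (fun i => B (i * (a / (n+1 : ℕ))) ω) (n+1) with hMn
  have hMm : ∀ n, Measurable (Mn n) := fun n =>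
    (measurable_dM (n+1)).comp (measurable_pi_lambda _ fun i => hB.measurable _)
  have hlim : ∀ ω, Tendsto (fun n => Mn n ω) atTop (nhds (fbmMaxLoss B a ω)) :=
    fun ω => maxLoss_tendsto hB ha ω
  have hm : Measurable (fbmMaxLoss B a) :=
    measurable_of_tendsto_metrizable hMm (tendsto_pi_nhds.2 hlim)
  have hnn : ∀ ω, 0 ≤ fbmMaxLoss B a ω := fun ω => by
    have := maxLoss_ge hB ω (u := 0) (v := 0) le_rfl le_rfl ha.le
    simpa using this
  have hn : ∀ n, ∫⁻ ω, ENNReal.ofReal (Mn n ω) ∂P ≤ ENNReal.ofReal (√2 * a ^ H) := by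
    intro n
    obtain ⟨h1, h2⟩ := fbm_discrete hB hH (δ := a / (n+1 : ℕ)) (by positivity) (n+1) (by omega)
    rw [← ofReal_integral_eq_lintegral_ofReal h1 (ae_of_all _ fun ω => dM_nonneg _ _)]
    apply ENNReal.ofReal_le_ofReal
    have : ((n+1 : ℕ) : ℝ) * (a / (n+1 : ℕ)) = a := by field_simp
    rw [this] at h2
    exact h2
  have hfat : ∫⁻ ω, ENNReal.ofReal (fbmMaxLoss B a ω) ∂P ≤ ENNReal.ofReal (√2 * a ^ H) := by
    calc ∫⁻ ω, ENNReal.ofReal (fbmMaxLoss B a ω) ∂P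
        = ∫⁻ ω, liminf (fun n => ENNReal.ofReal (Mn n ω)) atTop ∂P := by
          refine lintegral_congr fun ω => ?_
          exact ((ENNReal.continuous_ofReal.tendsto _).comp (hlim ω)).liminf_eq.symm
      _ ≤ liminf (fun n => ∫⁻ ω, ENNReal.ofReal (Mn n ω) ∂P) atTop :=
          lintegral_liminf_le fun n => (hMm n).ennreal_ofReal
      _ ≤ liminf (fun _ : ℕ => ENNReal.ofReal (√2 * a ^ H)) atTop :=
          liminf_le_liminf (Eventually.of_forall hn)
      _ = _ := liminf_const _
  have hMint : Integrable (fbmMaxLoss B a) P := by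
    refine ⟨hm.aestronglyMeasurable, ?_⟩
    rw [hasFiniteIntegral_iff_ofReal (ae_of_all _ hnn)]
    exact lt_of_le_of_lt hfat ENNReal.ofReal_lt_top
  refine ⟨hMint, ?_⟩
  rw [← ofReal_integral_eq_lintegral_ofReal hMint (ae_of_all _ hnn)] at hfat
  exact (ENNReal.ofReal_le_ofReal_iff (by positivity)).1 hfat

lemma fbm_abs (hB : IsFBM P H B) (hH : 1/2 ≤ H) {a : ℝ} (ha : 0 < a) :
    ∫ ω, B a ω ∂P = 0 ∧ ∫ ω, |B a ω| ∂P = a ^ H * √2 / √π := by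
  obtain ⟨v, hv⟩ := hB.gaussian 1 (fun _ => a) (fun _ => 1)
  have : (fun ω => ∑ i : Fin 1, (1 : ℝ) * B a ω) = B a := by ext ω; simp
  rw [this] at hv
  obtain ⟨_, h1, h2⟩ := gauss_law (hB.measurable a) hv
  refine ⟨h1, ?_⟩
  have hvar : ∫ ω, B a ω ^ 2 ∂P = (a ^ H) ^ 2 := by
    simp only [sq]
    rw [hB.cov a a ha.le ha.le, sub_self, abs_zero, zero_rpow (by linarith),
      ← rpow_add ha, ← two_mul]
    ring
  have hv2 : v = ⟨(a ^ H) ^ 2, sq_nonneg _⟩ := NNReal.coe_injective (by rw [← h2, hvar]; rfl)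
  rw [← gauss_abs (rpow_pos_of_pos ha H), ← hv2, ← hv]
  exact (integral_map (hB.measurable a).aemeasurable (by fun_prop)).symm

end fbm

theorem expected_maxLoss_bounds {Ω : Type*} [MeasurableSpace Ω] (P : Measure Ω)
    [IsProbabilityMeasure P] (H a : ℝ) (B : ℝ → Ω → ℝ)
    (hH : H ∈ Set.Ico (1/2 : ℝ) 1) (ha : 0 < a) (hB : IsFBM P H B) :
    Real.sqrt 2 * a ^ H / (2 * Real.sqrt π) ≤ ∫ ω, fbmMaxLoss B a ω ∂P ∧
      ∫ ω, fbmMaxLoss B a ω ∂P ≤ 2 * Real.sqrt 2 * a ^ H / Real.sqrt π := by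
  obtain ⟨hMint, hup⟩ := maxLoss_upper hB hH.1 ha
  obtain ⟨h0, habs⟩ := fbm_abs hB hH.1 ha
  have hA : 0 < a ^ H := rpow_pos_of_pos ha H
  have hpi : 0 < √π := by positivity
  constructor
  · have hBi : Integrable (B a) P := (fbm_memLp hB a).integrable (by norm_num)
    have hlow : ∫ ω, (|B a ω| - B a ω) / 2 ∂P ≤ ∫ ω, fbmMaxLoss B a ω ∂P := by
      apply integral_mono ((hBi.abs.sub hBi).div_const 2) hMint
      intro ω
      have h1 := maxLoss_ge hB ω (u := 0) (v := 0) le_rfl le_rfl ha.le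
      have h2 := maxLoss_ge hB ω (u := 0) (v := a) le_rfl ha.le le_rfl
      rw [hB.zero] at h1 h2
      change (|B a ω| - B a ω) / 2 ≤ fbmMaxLoss B a ω
      rcases abs_cases (B a ω) with h | h <;> linarith
    rw [integral_div, integral_sub hBi.abs hBi, h0, habs] at hlow
    refine le_trans (le_of_eq ?_) hlow
    field_simp
    ring
  · refine hup.trans ?_
    have h2 : √π ≤ 2 := by
      rw [sqrt_le_left (by norm_num)]
      linarith [pi_le_four]
    rw [le_div_iff₀ hpi]
    have : 0 < √2 * a ^ H := by positivity
    nlinarith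
end

section
/- For the maximum loss $M^{H,-}_a$ of fractional Brownian motion and any $y>0$, the tail probability satisfies $P(M^{H,-}_a > y) \le P(R^H_a \ge y) \le \frac{2\sqrt{2}\,a^H}{y\sqrt{\pi}}$. -/
open MeasureTheory ProbabilityTheory Real Set Filter

/-- Maximum of partial sums. -/
noncomputable def maxPS : (n : ℕ) → (Fin n → ℝ) → ℝ
  | 0, _ => 0
  | n + 1, d => max 0 (d 0 + maxPS n (fun i => d i.succ))

lemma maxPS_nonneg : ∀ (n : ℕ) (d : Fin n → ℝ), 0 ≤ maxPS n d
  | 0, _ => le_rfl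
  | _ + 1, _ => le_max_left _ _

lemma maxPS_midpoint : ∀ (n : ℕ) (u z : Fin n → ℝ),
    2 * maxPS n u ≤ maxPS n (u + z) + maxPS n (u - z)
  | 0, _, _ => by simp [maxPS]
  | n + 1, u, z => by
    have ih := maxPS_midpoint n (fun i => u i.succ) (fun i => z i.succ)
    have h1 := maxPS_nonneg (n+1) (u + z)
    have h2 := maxPS_nonneg (n+1) (u - z)
    have h3 : u 0 + z 0 + maxPS n ((fun i => u i.succ) + (fun i => z i.succ)) ≤
      maxPS (n+1) (u + z) := le_max_right _ _
    have h4 : u 0 - z 0 + maxPS n ((fun i => u i.succ) - (fun i => z i.succ)) ≤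
      maxPS (n+1) (u - z) := le_max_right _ _
    rcases max_cases 0 (u 0 + maxPS n (fun i => u i.succ)) with h | h
    · rw [show maxPS (n+1) u = _ from h.1]; linarith
    · rw [show maxPS (n+1) u = _ from h.1]; linarith

lemma maxPS_measurable : ∀ (n : ℕ), Measurable (maxPS n)
  | 0 => measurable_const
  | n + 1 => by
    have ih := maxPS_measurable n
    exact measurable_const.max ((measurable_pi_apply 0).add
      (ih.comp (measurable_pi_lambda _ fun i => measurable_pi_apply _)))

lemma le_maxPS : ∀ (n k : ℕ) (d : Fin n → ℝ),
    (∑ i : Fin n, if (i : ℕ) < k then d i else 0) ≤ maxPS n d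
  | 0, _, _ => by simp [maxPS]
  | n + 1, 0, d => by simpa using maxPS_nonneg (n+1) d
  | n + 1, k + 1, d => by
    rw [Fin.sum_univ_succ]
    have ih := le_maxPS n k (fun i => d i.succ)
    simp only [Fin.val_zero, Fin.val_succ, Nat.zero_lt_succ, if_true, Nat.add_lt_add_iff_right]
    exact le_trans (by linarith) (le_max_right _ _)

lemma pi_gauss_sum (n : ℕ) (v : Fin n → NNReal) :
    (Measure.pi (fun i => gaussianReal 0 (v i))).map (fun d => ∑ i, d i)
      = gaussianReal 0 (∑ i, v i) := by
  apply Measure.ext_of_charFun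
  ext t
  rw [charFun_map_sum_pi_eq_prod]
  simp only [charFun_gaussianReal, Finset.prod_apply, ← Complex.exp_sum]
  congr 1
  push_cast
  simp [Finset.sum_div, Finset.sum_mul]

lemma gauss_sym (v : NNReal) (f : ℝ → ENNReal) (hf : Measurable f) :
    ∫⁻ x, f (-x) ∂gaussianReal 0 v = ∫⁻ x, f x ∂gaussianReal 0 v := by
  conv_rhs => rw [← neg_zero (G := ℝ), ← gaussianReal_map_neg]
  rw [lintegral_map hf (by fun_prop)]

lemma gauss_shift (v : NNReal) (u : ℝ) (hu : 0 ≤ u) :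
    2 * ∫⁻ x, ENNReal.ofReal x ∂gaussianReal 0 v + ENNReal.ofReal u ≤
      2 * ∫⁻ x, ENNReal.ofReal (x + u) ∂gaussianReal 0 v := by
  have h1 := gauss_sym v (fun x => ENNReal.ofReal x) (by fun_prop)
  have h2 := gauss_sym v (fun x => ENNReal.ofReal (x + u)) (by fun_prop)
  rw [two_mul, two_mul]
  conv_lhs => enter [1, 2]; rw [← h1]
  conv_rhs => enter [2]; rw [← h2]
  have hc : ENNReal.ofReal u = ∫⁻ x, ENNReal.ofReal u ∂gaussianReal 0 v := by simp
  rw [hc, ← lintegral_add_left (by fun_prop), ← lintegral_add_left (by fun_prop),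
    ← lintegral_add_left (by fun_prop)]
  refine lintegral_mono fun x => ?_
  simp only
  rcases le_total 0 x with h | h
  · rw [ENNReal.ofReal_of_nonpos (p := -x) (by linarith), add_zero,
      ← ENNReal.ofReal_add h hu]
    exact le_self_add
  · rw [ENNReal.ofReal_of_nonpos (p := x) (by linarith), zero_add,
      ← ENNReal.ofReal_add (by linarith) hu]
    exact le_add_self

lemma lint_cons (n : ℕ) (v : Fin (n+1) → NNReal) (F : (Fin (n+1) → ℝ) → ENNReal)
    (hF : Measurable F) :
    ∫⁻ d, F d ∂(Measure.pi (fun i => gaussianReal 0 (v i))) =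
      ∫⁻ a, ∫⁻ b : Fin n → ℝ, F (Fin.cons a b)
        ∂(Measure.pi (fun i : Fin n => gaussianReal 0 (v i.succ))) ∂(gaussianReal 0 (v 0)) := by
  have mp := (measurePreserving_piFinSuccAbove (fun i => gaussianReal 0 (v i)) 0).symm
  rw [← mp.lintegral_comp hF, lintegral_prod (fun z => F ((MeasurableEquiv.piFinSuccAbove (fun _ => ℝ) 0).symm z))
    (hF.comp mp.measurable).aemeasurable]
  simp only [Fin.succAbove_zero]
  refine lintegral_congr fun a => lintegral_congr fun b => ?_
  congr 1
  change Fin.insertNth (α := fun _ => ℝ) 0 a b = _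
  rw [Fin.insertNth_zero']

lemma maxPS_reflect : ∀ (n : ℕ) (v : Fin n → NNReal) (x : ℝ), 0 ≤ x →
    ∫⁻ d, ENNReal.ofReal (maxPS n d - x) ∂(Measure.pi (fun i => gaussianReal 0 (v i))) ≤
      2 * ∫⁻ d, ENNReal.ofReal ((∑ i, d i) - x) ∂(Measure.pi (fun i => gaussianReal 0 (v i)))
  | 0, v, x, hx => by
    simp [maxPS, ENNReal.ofReal_of_nonpos (neg_nonpos.2 hx)]
  | n + 1, v, x, hx => by
    have hm := maxPS_measurable (n+1)
    have hm' := maxPS_measurable n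
    rw [lint_cons n v _ (by fun_prop), lint_cons n v _ (by fun_prop)]
    simp only [Fin.sum_univ_succ, maxPS, Fin.cons_zero, Fin.cons_succ]
    rw [← lintegral_const_mul _ (by
        apply Measurable.lintegral_prod_right'
          (f := fun a : ℝ × (Fin n → ℝ) => ENNReal.ofReal (a.1 + ∑ i, a.2 i - x))
        fun_prop)]
    refine lintegral_mono fun d => ?_
    simp only
    have key : ∀ m : ℝ, ENNReal.ofReal (max 0 (d + m) - x) = ENNReal.ofReal (d + m - x) := by
      intro m
      rcases max_cases 0 (d + m) with h | h
      · rw [h.1, ENNReal.ofReal_of_nonpos (by linarith), ENNReal.ofReal_of_nonpos (by linarith)]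
      · rw [h.1]
    simp only [key]
    rcases le_total d x with h | h
    · have ih := maxPS_reflect n (fun i => v i.succ) (x - d) (by linarith)
      have e : ∀ m : ℝ, m - (x - d) = d + m - x := fun m => by ring
      simpa only [e] using ih
    · have ih := maxPS_reflect n (fun i => v i.succ) 0 le_rfl
      have e : ∀ a : Fin n → ℝ, ENNReal.ofReal (d + maxPS n a - x) =
          ENNReal.ofReal (maxPS n a - 0) + ENNReal.ofReal (d - x) := by
        intro a
        rw [← ENNReal.ofReal_add (by simpa using maxPS_nonneg n a) (by linarith)]
        congr 1; ring
      simp only [e]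
      rw [lintegral_add_right _ (by fun_prop), lintegral_const, measure_univ, mul_one]
      refine (add_le_add_left ih _).trans ?_
      have gs := gauss_shift (∑ i, v (Fin.succ i)) (d - x) (by linarith)
      rw [← pi_gauss_sum, lintegral_map (by fun_prop) (by fun_prop),
        lintegral_map (by fun_prop) (by fun_prop)] at gs
      have e : ∀ m : ℝ, m + (d - x) = d + m - x := fun m => by ring
      simp only [sub_zero]
      simpa only [e] using gs

lemma gauss_pos (v : NNReal) :
    2 * ∫⁻ x, ENNReal.ofReal x ∂gaussianReal 0 v ≤ ENNReal.ofReal (√2 * √v / √π) := by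
  by_cases hv : v = 0
  · subst hv; simp
  have hv' : 0 < (v : ℝ) := by positivity
  have hb : 0 < (1 / (2 * v) : ℝ) := by positivity
  rw [gaussianReal_of_var_ne_zero _ hv, lintegral_withDensity_eq_lintegral_mul _
    (by fun_prop) (by fun_prop)]
  have e : ∀ x : ℝ, (gaussianPDF 0 v * fun x => ENNReal.ofReal x) x =
      (Ioi (0:ℝ)).indicator (fun x => ENNReal.ofReal ((√(2 * π * v))⁻¹ *
        (x ^ (1:ℝ) * rexp (-(1 / (2 * v)) * x ^ (2:ℝ))))) x := by
    intro x
    by_cases hx : 0 < x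
    · rw [indicator_of_mem (by exact hx), Pi.mul_apply, gaussianPDF,
        ← ENNReal.ofReal_mul (gaussianPDFReal_nonneg _ _ _), gaussianPDFReal]
      congr 1
      rw [rpow_one, rpow_two, mul_assoc, mul_comm x]
      congr 3
      field_simp
      ring
    · rw [indicator_of_notMem (by exact hx), Pi.mul_apply,
        ENNReal.ofReal_of_nonpos (p := x) (by linarith), mul_zero]
  simp only [e]
  rw [lintegral_indicator measurableSet_Ioi, ← ofReal_integral_eq_lintegral_ofReal,
    integral_const_mul, integral_rpow_mul_exp_neg_mul_rpow (by norm_num) (by norm_num) hb]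
  · rw [show (2 : ENNReal) = ENNReal.ofReal 2 by simp, ← ENNReal.ofReal_mul (by norm_num)]
    refine ENNReal.ofReal_le_ofReal (le_of_eq ?_)
    rw [show (-((1:ℝ) + 1) / 2) = -1 by norm_num, show (((1:ℝ) + 1) / 2) = 1 by norm_num,
      Real.Gamma_one, rpow_neg_one, Real.sqrt_mul (by positivity), Real.sqrt_mul (by norm_num)]
    have h1 := Real.sq_sqrt hv'.le
    have h2 := Real.sq_sqrt (show (0:ℝ) ≤ 2 by norm_num)
    have : 0 < √(v:ℝ) := by positivity
    field_simp
    nlinarith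
  · refine Integrable.const_mul ?_ _
    have := integrable_rpow_mul_exp_neg_mul_sq hb (s := 1) (by norm_num)
    simp only [rpow_two]
    exact this.integrableOn
  · refine (ae_restrict_iff' measurableSet_Ioi).2 (ae_of_all _ fun x hx => ?_)
    have : (0:ℝ) < x := hx
    simp only [Pi.zero_apply]
    positivity

lemma compare_gauss {Ω : Type*} [MeasurableSpace Ω] (P : Measure Ω) [IsProbabilityMeasure P]
    (n : ℕ) (X : Fin n → Ω → ℝ) (hX : ∀ i, Measurable (X i)) (C : Fin n → Fin n → ℝ)
    (hsymm : ∀ i j, C i j = C j i) (hpos : ∀ i j, 0 ≤ C i j)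
    (v : Fin n → NNReal) (hv : ∀ i, (v i : ℝ) = ∑ j, C i j)
    (hG : ∀ t : Fin n → ℝ, ∃ w : NNReal, (w : ℝ) = ∑ i, ∑ j, t i * t j * C i j ∧
      P.map (fun ω => ∑ i, t i * X i ω) = gaussianReal 0 w) :
    ∫⁻ ω, ENNReal.ofReal (maxPS n (fun i => X i ω)) ∂P ≤
      ∫⁻ d, ENNReal.ofReal (maxPS n d) ∂(Measure.pi (fun i => gaussianReal 0 (v i))) := by
  classical
  have hm := maxPS_measurable n
  set S : Matrix (Fin n) (Fin n) ℝ := Matrix.diagonal (fun i => (v i : ℝ)) - Matrix.of C with hS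
  have quad : ∀ t : Fin n → ℝ, t ⬝ᵥ (S.mulVec t) =
      ∑ i, (v i : ℝ) * t i ^ 2 - ∑ i, ∑ j, t i * t j * C i j := by
    intro t
    rw [hS, Matrix.sub_mulVec, dotProduct_sub]
    congr 1
    · simp only [dotProduct, Matrix.mulVec_diagonal]
      exact Finset.sum_congr rfl fun i _ => by ring
    · simp only [dotProduct, Matrix.mulVec, Matrix.of_apply, Finset.mul_sum]
      exact Finset.sum_congr rfl fun i _ => Finset.sum_congr rfl fun j _ => by ring
  have hPSD : S.PosSemidef := by
    refine Matrix.PosSemidef.of_dotProduct_mulVec_nonneg ?_ ?_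
    · ext i j
      simp only [hS, Matrix.conjTranspose_apply, Matrix.sub_apply, Matrix.of_apply, star_trivial,
        Matrix.diagonal_apply]
      rw [hsymm]
      by_cases h : i = j
      · subst h; simp
      · simp [h, Ne.symm h]
    · intro t
      rw [star_trivial, quad]
      have e1 : ∑ i, (v i : ℝ) * t i ^ 2 = ∑ i, ∑ j, C i j * t i ^ 2 := by
        simp only [hv, Finset.sum_mul]
      have e2 : ∑ i, (v i : ℝ) * t i ^ 2 = ∑ i, ∑ j, C i j * t j ^ 2 := by
        rw [e1, Finset.sum_comm]
        exact Finset.sum_congr rfl fun i _ => Finset.sum_congr rfl fun j _ => by rw [hsymm]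
      have e3 : 0 ≤ ∑ i, ∑ j, C i j * (t i - t j) ^ 2 :=
        Finset.sum_nonneg fun i _ => Finset.sum_nonneg fun j _ => mul_nonneg (hpos i j) (sq_nonneg _)
      have e4 : ∑ i, ∑ j, C i j * (t i - t j) ^ 2 = ∑ i, ∑ j, C i j * t i ^ 2 +
          ∑ i, ∑ j, C i j * t j ^ 2 - 2 * ∑ i, ∑ j, t i * t j * C i j := by
        simp only [Finset.mul_sum, ← Finset.sum_add_distrib, ← Finset.sum_sub_distrib]
        exact Finset.sum_congr rfl fun i _ => Finset.sum_congr rfl fun j _ => by ring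
      linarith
  set ν := multivariateGaussian (0 : EuclideanSpace ℝ (Fin n)) S with hν
  have hXm : Measurable (fun ω => WithLp.toLp 2 (fun i => X i ω)) := by fun_prop
  set μ : Measure (EuclideanSpace ℝ (Fin n)) :=
    P.map (fun ω => WithLp.toLp 2 (fun i => X i ω)) with hμ
  have : IsProbabilityMeasure μ := Measure.isProbabilityMeasure_map hXm.aemeasurable
  have hconv : μ ∗ ν = (Measure.pi (fun i => gaussianReal 0 (v i))).map (WithLp.toLp 2) := by
    have : IsProbabilityMeasure ((Measure.pi (fun i => gaussianReal 0 (v i))).map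
      (WithLp.toLp 2 : (Fin n → ℝ) → EuclideanSpace ℝ (Fin n))) :=
      Measure.isProbabilityMeasure_map (by fun_prop)
    apply Measure.ext_of_charFun
    ext t
    obtain ⟨w, hw, hl⟩ := hG t
    have h1 : charFun μ t = Complex.exp (-(w : ℂ) / 2) := by
      have h2 := charFun_gaussianReal (μ := 0) (v := w) 1
      rw [← hl, charFun_apply, integral_map (by fun_prop) (by fun_prop)] at h2
      rw [charFun_apply, hμ, integral_map (by fun_prop) (by fun_prop)]
      simp only [PiLp.inner_apply]
      simpa [neg_div] using h2
    rw [charFun_conv, h1, hν, charFun_multivariateGaussian hPSD, charFun_pi]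
    simp only [charFun_gaussianReal, ← Complex.exp_sum, ← Complex.exp_add]
    congr 1
    rw [quad]
    have hw' : (w : ℂ) = ((∑ i, ∑ j, t i * t j * C i j : ℝ) : ℂ) := by
      rw [← hw]
    rw [hw']
    push_cast
    simp only [inner_zero_right]
    simp
    rw [← Finset.sum_div]
    ring
  have hneg : ν.map (fun z => -z) = ν := by
    have : IsProbabilityMeasure (ν.map (fun z => -z)) :=
      Measure.isProbabilityMeasure_map (by fun_prop)
    apply Measure.ext_of_charFun
    ext t
    have := charFun_map_smul (μ := ν) (-1) t
    simp only [neg_smul, one_smul] at this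
    rw [this, hν, charFun_multivariateGaussian hPSD, charFun_multivariateGaussian hPSD]
    simp [Matrix.mulVec_neg]
  let g : EuclideanSpace ℝ (Fin n) → ENNReal := fun x => ENNReal.ofReal (maxPS n (WithLp.ofLp x))
  have hg : Measurable g := by fun_prop
  have r1 : ∫⁻ ω, ENNReal.ofReal (maxPS n (fun i => X i ω)) ∂P = ∫⁻ x, g x ∂μ := by
    rw [hμ, lintegral_map hg hXm]
  have r2 : ∫⁻ d, ENNReal.ofReal (maxPS n d) ∂(Measure.pi (fun i => gaussianReal 0 (v i))) =
      ∫⁻ x, g x ∂(μ ∗ ν) := by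
    rw [hconv, lintegral_map hg (by fun_prop)]
  rw [r1, r2, Measure.lintegral_conv hg]
  refine lintegral_mono fun x => ?_
  have s1 : ∫⁻ z, g (x - z) ∂ν = ∫⁻ z, g (x + z) ∂ν := by
    conv_rhs => rw [← hneg]
    rw [lintegral_map (by fun_prop) (by fun_prop)]
    simp only [sub_eq_add_neg]
  have s2 : 2 * g x ≤ 2 * ∫⁻ z, g (x + z) ∂ν := by
    calc 2 * g x = ∫⁻ z, 2 * g x ∂ν := by simp
      _ ≤ ∫⁻ z, (g (x + z) + g (x - z)) ∂ν := by
        refine lintegral_mono fun z => ?_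
        have := maxPS_midpoint n (WithLp.ofLp x) (WithLp.ofLp z)
        simp only [g]
        rw [← ENNReal.ofReal_add (maxPS_nonneg _ _) (maxPS_nonneg _ _),
          two_mul, ← ENNReal.ofReal_add (maxPS_nonneg _ _) (maxPS_nonneg _ _), ← two_mul]
        exact ENNReal.ofReal_le_ofReal this
      _ = _ := by
        rw [lintegral_add_left (by fun_prop), s1, two_mul]
  exact (ENNReal.mul_le_mul_iff_right (by simp) (by simp)).1 s2

lemma compare_final {Ω : Type*} [MeasurableSpace Ω] (P : Measure Ω) [IsProbabilityMeasure P]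
    (n : ℕ) (X : Fin n → Ω → ℝ) (hX : ∀ i, Measurable (X i)) (C : Fin n → Fin n → ℝ)
    (hsymm : ∀ i j, C i j = C j i) (hpos : ∀ i j, 0 ≤ C i j)
    (hG : ∀ t : Fin n → ℝ, ∃ w : NNReal, (w : ℝ) = ∑ i, ∑ j, t i * t j * C i j ∧
      P.map (fun ω => ∑ i, t i * X i ω) = gaussianReal 0 w) :
    ∫⁻ ω, ENNReal.ofReal (maxPS n (fun i => X i ω)) ∂P ≤
      ENNReal.ofReal (√2 * √(∑ i, ∑ j, C i j) / √π) := by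
  let v : Fin n → NNReal := fun i => ⟨∑ j, C i j, Finset.sum_nonneg fun j _ => hpos i j⟩
  refine (compare_gauss P n X hX C hsymm hpos v (fun i => rfl) hG).trans ?_
  have h := maxPS_reflect n v 0 le_rfl
  simp only [sub_zero] at h
  refine h.trans ?_
  have h2 := gauss_pos (∑ i, v i)
  rw [← pi_gauss_sum, lintegral_map (by fun_prop) (by fun_prop)] at h2
  refine h2.trans (le_of_eq ?_)
  rw [NNReal.coe_sum]
  rfl

lemma law_facts {Ω : Type*} [MeasurableSpace Ω] (P : Measure Ω)
    (f : Ω → ℝ) (hf : Measurable f) (w : NNReal) (h : P.map f = gaussianReal 0 w) :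
    MemLp f 2 P ∧ ∫ ω, f ω ^ 2 ∂P = w := by
  constructor
  · have := memLp_id_gaussianReal (μ := 0) (v := w) 2
    rw [← h] at this
    exact (memLp_map_measure_iff (by fun_prop) hf.aemeasurable).1 this
  · have := variance_fun_id_gaussianReal (μ := 0) (v := w)
    rw [variance_eq_integral (by fun_prop)] at this
    simp only [integral_id_gaussianReal, sub_zero] at this
    rw [← this, ← h, integral_map hf.aemeasurable (by fun_prop)]

lemma abs_rpow_mid (p : ℝ) (hp : 1 ≤ p) (x d : ℝ) :
    2 * |x| ^ p ≤ |x - d| ^ p + |x + d| ^ p := by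
  have h1 : |x| ≤ (1/2) * |x - d| + (1/2) * |x + d| := by
    have := abs_add_le (x - d) (x + d)
    rw [show x - d + (x + d) = 2 * x by ring, abs_mul, abs_two] at this
    linarith
  have h2 := (convexOn_rpow hp).2 (abs_nonneg (x - d)) (abs_nonneg (x + d))
    (show (0:ℝ) ≤ 1/2 by norm_num) (show (0:ℝ) ≤ 1/2 by norm_num) (by norm_num)
  simp only [smul_eq_mul] at h2
  have h3 := Real.rpow_le_rpow (abs_nonneg x) h1 (show 0 ≤ p by linarith)
  linarith

lemma fbm_disc {Ω : Type*} [MeasurableSpace Ω] (P : Measure Ω)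
    [IsProbabilityMeasure P] (H a : ℝ) (B : ℝ → Ω → ℝ)
    (hH : H ∈ Set.Ico (1/2 : ℝ) 1) (ha : 0 < a) (hB : IsFBM P H B) (n : ℕ) (hn : 0 < n) :
    ∫⁻ ω, ENNReal.ofReal (maxPS n (fun i : Fin n =>
      B (((i : ℕ) + 1 : ℕ) * (a / n)) ω - B ((i : ℕ) * (a / n)) ω)) ∂P ≤
      ENNReal.ofReal (√2 * a ^ H / √π) := by
  have hH1 := hH.1
  set δ := a / n with hδ
  have hδ0 : 0 < δ := by positivity
  have hmem : ∀ t, MemLp (B t) 2 P := by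
    intro t
    obtain ⟨w, hw⟩ := hB.gaussian 1 (fun _ => t) (fun _ => 1)
    simp only [Finset.univ_unique, Finset.sum_singleton, one_mul] at hw
    exact (law_facts P _ (hB.measurable t) w hw).1
  let X : Fin n → Ω → ℝ := fun i ω =>
    B (((i : ℕ) + 1 : ℕ) * δ) ω - B ((i : ℕ) * δ) ω
  have hXm : ∀ i, Measurable (X i) := fun i => (hB.measurable _).sub (hB.measurable _)
  have hXL : ∀ i, MemLp (X i) 2 P := fun i => (hmem _).sub (hmem _)
  have hprod : ∀ i j, Integrable (fun ω => X i ω * X j ω) P := fun i j =>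
    (hXL i).integrable_mul (hXL j)
  have hBprod : ∀ s t, Integrable (fun ω => B s ω * B t ω) P := fun s t =>
    (hmem s).integrable_mul (hmem t)
  let C : Fin n → Fin n → ℝ := fun i j => ∫ ω, X i ω * X j ω ∂P
  have hquad : ∀ t : Fin n → ℝ, ∫ ω, (∑ i, t i * X i ω) ^ 2 ∂P =
      ∑ i, ∑ j, t i * t j * C i j := by
    intro t
    have e : ∀ ω, (∑ i, t i * X i ω) ^ 2 = ∑ i, ∑ j, t i * t j * (X i ω * X j ω) := by
      intro ω
      rw [sq, Finset.sum_mul_sum]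
      exact Finset.sum_congr rfl fun i _ => Finset.sum_congr rfl fun j _ => by ring
    simp only [e]
    rw [integral_finsetSum _ fun i _ => integrable_finsetSum _ fun j _ =>
      (hprod i j).const_mul _]
    refine Finset.sum_congr rfl fun i _ => ?_
    rw [integral_finsetSum _ fun j _ => (hprod i j).const_mul _]
    exact Finset.sum_congr rfl fun j _ => integral_const_mul _ _
  have hCpos : ∀ i j, 0 ≤ C i j := by
    intro i j
    have cov4 : ∀ s t s' t' : ℝ, 0 ≤ s → 0 ≤ t → 0 ≤ s' → 0 ≤ t' →
        ∫ ω, (B t ω - B s ω) * (B t' ω - B s' ω) ∂P =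
        (|t' - s| ^ (2*H) + |s' - t| ^ (2*H) - |t' - t| ^ (2*H) - |s' - s| ^ (2*H)) / 2 := by
      intro s t s' t' hs ht hs' ht'
      have e : ∀ ω, (B t ω - B s ω) * (B t' ω - B s' ω) =
        (B t ω * B t' ω - B t ω * B s' ω) - (B s ω * B t' ω - B s ω * B s' ω) :=
        fun ω => by ring
      simp only [e]
      have i1 : ∀ p q r : ℝ, Integrable (fun ω => B p ω * B q ω - B p ω * B r ω) P :=
        fun p q r => (hBprod p q).sub (hBprod p r)
      rw [integral_sub (i1 _ _ _) (i1 _ _ _),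
        integral_sub (hBprod _ _) (hBprod _ _), integral_sub (hBprod _ _) (hBprod _ _),
        hB.cov _ _ ht ht', hB.cov _ _ ht hs', hB.cov _ _ hs ht', hB.cov _ _ hs hs']
      ring
    simp only [C, X]
    rw [cov4 _ _ _ _ (by positivity) (by positivity) (by positivity) (by positivity)]
    have := abs_rpow_mid (2*H) (by linarith) (((j:ℕ):ℝ) * δ - ((i:ℕ):ℝ) * δ) δ
    push_cast
    rw [show ((j:ℕ) + 1 : ℝ) * δ - (i:ℕ) * δ = ((j:ℕ):ℝ) * δ - ((i:ℕ):ℝ) * δ + δ by ring,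
      show ((j:ℕ) : ℝ) * δ - ((i:ℕ) + 1) * δ = ((j:ℕ):ℝ) * δ - ((i:ℕ):ℝ) * δ - δ by ring,
      show ((j:ℕ) + 1 : ℝ) * δ - ((i:ℕ) + 1) * δ = ((j:ℕ):ℝ) * δ - ((i:ℕ):ℝ) * δ by ring]
    linarith
  have hsum : ∀ ω, ∑ i, X i ω = B a ω := by
    intro ω
    have h1 := Fin.sum_univ_eq_sum_range
      (fun i => B (((i : ℕ) + 1 : ℕ) * δ) ω - B ((i : ℕ) * δ) ω) n
    have h2 := Finset.sum_range_sub (fun i : ℕ => B ((i : ℕ) * δ) ω) n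
    simp only [X]
    rw [h1, h2]
    simp only [Nat.cast_zero, zero_mul, hB.zero, sub_zero]
    congr 1
    rw [hδ]; field_simp
  have htot : ∑ i, ∑ j, C i j = (a ^ H) ^ 2 := by
    have h1 := hquad (fun _ => 1)
    simp only [one_mul, hsum] at h1
    rw [← h1]
    have h2 := hB.cov a a ha.le ha.le
    simp only [sq]
    rw [h2, sub_self, abs_zero, Real.zero_rpow (by linarith), ← Real.rpow_add ha]
    ring_nf
  have hfin := compare_final P n X hXm C (fun i j => by simp only [C, mul_comm]) hCpos (by
    intro t
    obtain ⟨w, hw⟩ := hB.gaussian (n + n)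
      (Fin.append (fun i : Fin n => (((i : ℕ) + 1 : ℕ) : ℝ) * δ) (fun i : Fin n => ((i : ℕ) : ℝ) * δ))
      (Fin.append t (-t))
    have e : (fun ω => ∑ i, t i * X i ω) = (fun ω => ∑ i, Fin.append t (-t) i *
      B (Fin.append (fun i : Fin n => (((i : ℕ) + 1 : ℕ) : ℝ) * δ)
        (fun i : Fin n => ((i : ℕ) : ℝ) * δ) i) ω) := by
      ext ω
      rw [Fin.sum_univ_add]
      simp only [Fin.append_left, Fin.append_right, ← Finset.sum_add_distrib, X, Pi.neg_apply]
      exact Finset.sum_congr rfl fun i _ => by ring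
    rw [← e] at hw
    refine ⟨w, ?_, hw⟩
    rw [← (law_facts P _ (by fun_prop) w hw).2, hquad])
  rw [htot, Real.sqrt_sq (by positivity)] at hfin
  exact hfin

/-- Discretised supremum in the limit. -/
noncomputable def limSup {Ω : Type*} (B : ℝ → Ω → ℝ) (a : ℝ) (ω : Ω) : ENNReal :=
  Filter.liminf (fun m : ℕ => ENNReal.ofReal (maxPS (m+1) (fun i : Fin (m+1) =>
      B (((i : ℕ) + 1 : ℕ) * (a / (m + 1 : ℕ))) ω - B ((i : ℕ) * (a / (m + 1 : ℕ))) ω))) atTop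

lemma limSup_meas {Ω : Type*} [MeasurableSpace Ω] (P : Measure Ω) (H a : ℝ) (B : ℝ → Ω → ℝ)
    (hB : IsFBM P H B) : Measurable (limSup B a) := by
  have := hB.measurable
  refine Measurable.liminf fun m => ?_
  have hm := maxPS_measurable (m+1)
  exact ENNReal.measurable_ofReal.comp (hm.comp (measurable_pi_lambda _ fun i =>
    (this _).sub (this _)))

lemma limSup_lint {Ω : Type*} [MeasurableSpace Ω] (P : Measure Ω)
    [IsProbabilityMeasure P] (H a : ℝ) (B : ℝ → Ω → ℝ)
    (hH : H ∈ Set.Ico (1/2 : ℝ) 1) (ha : 0 < a) (hB : IsFBM P H B) :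
    ∫⁻ ω, limSup B a ω ∂P ≤ ENNReal.ofReal (√2 * a ^ H / √π) := by
  have := hB.measurable
  unfold limSup
  refine (lintegral_liminf_le fun m => ?_).trans ?_
  · have hm := maxPS_measurable (m+1)
    exact ENNReal.measurable_ofReal.comp (hm.comp (measurable_pi_lambda _ fun i =>
      (this _).sub (this _)))
  · refine Filter.liminf_le_of_le (by isBoundedDefault) fun b hb => ?_
    obtain ⟨m, hm⟩ := hb.exists
    exact hm.trans (fbm_disc P H a B hH ha hB (m+1) (Nat.succ_pos m))

lemma le_limSup (B : ℝ → ℝ) (a : ℝ) (ha : 0 < a) (h0 : B 0 = 0)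
    (hc : Continuous B) (t : ℝ) (ht : t ∈ Icc 0 a) :
    ENNReal.ofReal (B t) ≤ limSup (fun t (_ : Unit) => B t) a () := by
  unfold limSup
  let s : ℕ → ℝ := fun m => (⌊t / a * (m + 1 : ℕ)⌋₊ : ℝ) * (a / (m + 1 : ℕ))
  have hs : Tendsto s atTop (nhds t) := by
    have h1 := (tendsto_nat_floor_mul_div_atTop (R := ℝ) (a := t / a) (by
      have := ht.1; positivity))
    have h2 : Tendsto (fun m : ℕ => ((m + 1 : ℕ) : ℝ)) atTop atTop :=
      tendsto_natCast_atTop_atTop.comp (tendsto_add_atTop_nat 1)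
    have h3 := (h1.comp h2).mul_const a
    rw [div_mul_cancel₀ _ ha.ne'] at h3
    refine h3.congr fun m => ?_
    simp only [s, Function.comp]
    ring
  have hB : Tendsto (fun m => ENNReal.ofReal (B (s m))) atTop (nhds (ENNReal.ofReal (B t))) :=
    (ENNReal.continuous_ofReal.tendsto _).comp ((hc.tendsto t).comp hs)
  rw [← hB.liminf_eq]
  refine liminf_le_liminf (Eventually.of_forall fun m => ENNReal.ofReal_le_ofReal ?_)
  set k := ⌊t / a * (m + 1 : ℕ)⌋₊ with hk
  have hkm : k ≤ m + 1 := by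
    apply Nat.floor_le_of_le
    have : t / a ≤ 1 := (div_le_one ha).2 ht.2
    have h2 : (0:ℝ) ≤ (m + 1 : ℕ) := by positivity
    nlinarith
  refine le_trans (le_of_eq ?_) (le_maxPS (m+1) k _)
  rw [Fin.sum_univ_eq_sum_range (fun i => if i < k then
    B ((i + 1 : ℕ) * (a / (m + 1 : ℕ))) - B ((i : ℕ) * (a / (m + 1 : ℕ))) else 0) (m+1),
    ← Finset.sum_filter]
  have : Finset.filter (fun i => i < k) (Finset.range (m+1)) = Finset.range k := by
    ext i; simp; omega
  rw [this, Finset.sum_range_sub (fun i : ℕ => B ((i : ℕ) * (a / (m + 1 : ℕ)))) k]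
  simp [h0, s, hk]

lemma IsFBM.neg {Ω : Type*} [MeasurableSpace Ω] {P : Measure Ω} {H : ℝ} {B : ℝ → Ω → ℝ}
    (hB : IsFBM P H B) : IsFBM P H (fun t ω => - B t ω) where
  measurable t := (hB.measurable t).neg
  gaussian n t c := by
    obtain ⟨v, hv⟩ := hB.gaussian n t (-c)
    exact ⟨v, by simpa using hv⟩
  zero ω := by simp [hB.zero]
  cov s t hs ht := by simpa using hB.cov s t hs ht
  cont ω := (hB.cont ω).neg

theorem maxLoss_tail_bound {Ω : Type*} [MeasurableSpace Ω] (P : Measure Ω)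
    [IsProbabilityMeasure P] (H a : ℝ) (B : ℝ → Ω → ℝ)
    (hH : H ∈ Set.Ico (1/2 : ℝ) 1) (ha : 0 < a) (hB : IsFBM P H B)
    (y : ℝ) (hy : 0 < y) :
    P {ω | y < fbmMaxLoss B a ω} ≤ P {ω | y ≤ fbmSup B a ω - fbmInf B a ω} ∧
      P {ω | y ≤ fbmSup B a ω - fbmInf B a ω} ≤
        ENNReal.ofReal (2 * Real.sqrt 2 * a ^ H / (y * Real.sqrt π)) := by
  have hcomp : ∀ ω, IsCompact ((fun v => B v ω) '' Set.Icc 0 a) := fun ω =>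
    isCompact_Icc.image (hB.cont ω)
  have hne : ∀ ω, ((fun v => B v ω) '' Set.Icc 0 a).Nonempty := fun ω =>
    ⟨_, 0, ⟨le_rfl, ha.le⟩, rfl⟩
  constructor
  · refine measure_mono fun ω hω => ?_
    simp only [mem_setOf_eq] at hω ⊢
    refine hω.le.trans ?_
    refine csSup_le ⟨0, 0, 0, le_rfl, le_rfl, ha.le, by simp⟩ ?_
    rintro x ⟨u, v, hu, huv, hva, rfl⟩
    have h1 : B u ω ≤ fbmSup B a ω :=
      le_csSup (hcomp ω).bddAbove ⟨u, ⟨hu, huv.trans hva⟩, rfl⟩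
    have h2 : fbmInf B a ω ≤ B v ω :=
      csInf_le (hcomp ω).bddBelow ⟨v, ⟨hu.trans huv, hva⟩, rfl⟩
    linarith
  · have hN := hB.neg
    have hsub : {ω | y ≤ fbmSup B a ω - fbmInf B a ω} ⊆
        {ω | ENNReal.ofReal y ≤ limSup B a ω + limSup (fun t ω => - B t ω) a ω} := by
      intro ω hω
      simp only [mem_setOf_eq] at hω ⊢
      obtain ⟨u, hu, hu'⟩ := (hcomp ω).sSup_mem (hne ω)
      obtain ⟨v, hv, hv'⟩ := (hcomp ω).sInf_mem (hne ω)
      have h1 : ENNReal.ofReal (B u ω) ≤ limSup B a ω :=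
        le_limSup (fun t => B t ω) a ha (hB.zero ω) (hB.cont ω) u hu
      have h2 : ENNReal.ofReal (-B v ω) ≤ limSup (fun t ω => - B t ω) a ω :=
        le_limSup (fun t => - B t ω) a ha (hN.zero ω) (hN.cont ω) v hv
      refine le_trans ?_ (add_le_add h1 h2)
      refine le_trans (ENNReal.ofReal_le_ofReal (hω.trans (le_of_eq ?_))) ENNReal.ofReal_add_le
      simp only at hu' hv'
      rw [hu', hv', fbmSup, fbmInf]
      ring
    have hm1 := limSup_meas P H a B hB
    have hm2 := limSup_meas P H a _ hN
    have hy0 : ENNReal.ofReal y ≠ 0 := by simpa using hy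
    refine (measure_mono hsub).trans ((meas_ge_le_lintegral_div (hm1.add hm2).aemeasurable hy0
      ENNReal.ofReal_ne_top).trans ?_)
    refine ENNReal.div_le_of_le_mul ?_
    simp only [Pi.add_apply]
    rw [lintegral_add_left hm1]
    refine (add_le_add (limSup_lint P H a B hH ha hB) (limSup_lint P H a _ hH ha hN)).trans ?_
    rw [← ENNReal.ofReal_add (by positivity) (by positivity),
      ← ENNReal.ofReal_mul (by positivity)]
    refine ENNReal.ofReal_le_ofReal (le_of_eq ?_)
    field_simp
    ring
end

section
/- For drifted fractional Brownian motion $Y_t = \mu t + \sigma B^H_t$, the maximum loss satisfies $\lim_{x\to\infty}\frac{1}{x^2}\log P(M^{H,-}_t > x) = -\frac{1}{2\sigma^2 t^{2H}}$. -/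
open MeasureTheory ProbabilityTheory Real Set Filter

lemma chain_aux (f : ℝ → ℝ) (hf : Continuous f) (t : ℝ) (ht : 0 < t) (N : ℕ) (a : ℝ) (ha : 0 ≤ a)
    (h : ∀ j : ℕ, ∀ k : ℕ, k < 2 ^ (N + j + 1) →
      |f (t * ((k + 1 : ℕ) : ℝ) / 2 ^ (N + j + 1)) - f (t * (k : ℝ) / 2 ^ (N + j + 1))|
        ≤ a / 4 * (3 / 4) ^ j)
    (s : ℝ) (hs0 : 0 ≤ s) (hst : s ≤ t) :
    ∃ k : ℕ, k ≤ 2 ^ N ∧ |f s - f (t * (k : ℝ) / 2 ^ N)| ≤ a := by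
  set K : ℕ → ℕ := fun j => ⌊s * 2 ^ (N + j) / t⌋₊ with hK
  have hpos : ∀ j, 0 ≤ s * 2 ^ (N + j) / t := fun j => by positivity
  have hle : ∀ j, K j ≤ 2 ^ (N + j) := by
    intro j
    apply Nat.floor_le_of_le
    rw [div_le_iff₀ ht]
    push_cast
    have : (0:ℝ) < 2 ^ (N + j) := by positivity
    nlinarith
  set S : ℕ → ℝ := fun j => t * (K j : ℝ) / 2 ^ (N + j) with hS
  have hSlim : Tendsto S atTop (nhds s) := by
    have h1 : Tendsto (fun j : ℕ => t * (1 / 2 : ℝ) ^ j) atTop (nhds 0) := by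
      simpa using (tendsto_pow_atTop_nhds_zero_of_lt_one (by norm_num) (by norm_num :
        (1 / 2 : ℝ) < 1)).const_mul t
    rw [tendsto_iff_dist_tendsto_zero]
    refine squeeze_zero (fun _ => dist_nonneg) (fun j => ?_) h1
    have a1 := Nat.floor_le (hpos j)
    have a2 := Nat.lt_floor_add_one (s * 2 ^ (N + j) / t)
    change ((K j : ℝ)) ≤ _ at a1
    change _ < ((K j : ℝ)) + 1 at a2
    rw [le_div_iff₀ ht] at a1
    rw [div_lt_iff₀ ht] at a2
    have p : (0:ℝ) < 2 ^ (N + j) := by positivity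
    have b1 : S j ≤ s := by
      simp only [hS]; rw [div_le_iff₀ p]; linarith
    have b2 : s ≤ S j + t / 2 ^ (N + j) := by
      simp only [hS]; rw [← add_div, le_div_iff₀ p]; linarith
    have b3 : t / 2 ^ (N + j) ≤ t * (1 / 2 : ℝ) ^ j := by
      rw [one_div, inv_pow, ← div_eq_mul_inv]
      gcongr
      · norm_num
      · omega
    rw [Real.dist_eq, abs_le]
    constructor <;> linarith
  have hstep : ∀ j, |f (S (j + 1)) - f (S j)| ≤ a / 4 * (3 / 4) ^ j := by
    intro j
    have a1 := Nat.floor_le (hpos j)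
    have a2 := Nat.lt_floor_add_one (s * 2 ^ (N + j) / t)
    have a3 := Nat.floor_le (hpos (j + 1))
    have a4 := Nat.lt_floor_add_one (s * 2 ^ (N + (j + 1)) / t)
    change ((K j : ℝ)) ≤ _ at a1
    change _ < ((K j : ℝ)) + 1 at a2
    change ((K (j + 1) : ℝ)) ≤ _ at a3
    change _ < ((K (j + 1) : ℝ)) + 1 at a4
    have e : s * 2 ^ (N + (j + 1)) / t = 2 * (s * 2 ^ (N + j) / t) := by ring
    rw [e] at a3 a4
    have c1 : 2 * K j < K (j + 1) + 1 := by
      have : ((2 * K j : ℕ) : ℝ) < ((K (j + 1) + 1 : ℕ) : ℝ) := by push_cast; linarith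
      exact_mod_cast this
    have c2 : K (j + 1) < 2 * K j + 2 := by
      have : ((K (j + 1) : ℕ) : ℝ) < ((2 * K j + 2 : ℕ) : ℝ) := by push_cast; linarith
      exact_mod_cast this
    have hSj : S j = t * ((2 * K j : ℕ) : ℝ) / 2 ^ (N + j + 1) := by
      simp only [hS]; push_cast; rw [pow_succ]; field_simp
    have hc : K (j + 1) = 2 * K j ∨ K (j + 1) = 2 * K j + 1 := by omega
    rcases hc with hc | hc
    · have : S (j + 1) = S j := by
        rw [hSj]; simp only [hS]; rw [hc]; rfl
      rw [this]; simp; positivity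
    · have h1 : S (j + 1) = t * ((2 * K j + 1 : ℕ) : ℝ) / 2 ^ (N + j + 1) := by
        simp only [hS]; rw [hc]; rfl
      rw [h1, hSj]
      apply h
      have := hle (j + 1)
      rw [← add_assoc] at this
      omega
  have hsum : ∀ j, |f (S j) - f (S 0)| ≤ a * (1 - (3 / 4) ^ j) := by
    intro j
    induction j with
    | zero => simp
    | succ j ih =>
      have := abs_sub_le (f (S (j + 1))) (f (S j)) (f (S 0))
      have h2 := hstep j
      rw [pow_succ]
      linarith
  refine ⟨K 0, by simpa using hle 0, ?_⟩
  have hl : Tendsto (fun j => |f (S j) - f (S 0)|) atTop (nhds |f s - f (S 0)|) :=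
    (((hf.tendsto s).comp hSlim).sub_const _).abs
  have : |f s - f (S 0)| ≤ a := by
    refine le_of_tendsto' hl fun j => (hsum j).trans ?_
    have : (0:ℝ) ≤ (3 / 4) ^ j := by positivity
    nlinarith
  simpa [hS] using this

lemma fbm_var {Ω : Type*} [MeasurableSpace Ω] {P : Measure Ω}
    [IsProbabilityMeasure P] {H : ℝ} {B : ℝ → Ω → ℝ}
    (hH : H ∈ Set.Ico (1/2 : ℝ) 1) (hB : IsFBM P H B) (u v : ℝ) (hu : 0 ≤ u) (hv : 0 ≤ v) :
    P.map (fun ω => B u ω - B v ω) = gaussianReal 0 (Real.toNNReal (|u - v| ^ (2 * H))) := by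
  have hL : ∀ u, MemLp (B u) 2 P := by
    intro u
    obtain ⟨w, hw⟩ := hB.gaussian 1 (fun _ => u) (fun _ => 1)
    simp at hw
    have : MemLp id 2 (P.map (B u)) := by
      change P.map (B u) = _ at hw
      rw [hw]; exact memLp_id_gaussianReal 2
    exact (memLp_map_measure_iff (by fun_prop) (hB.measurable u).aemeasurable).1 this
  obtain ⟨w, hw⟩ := hB.gaussian 2 ![u, v] ![1, -1]
  have e : (fun ω => ∑ i, (![1, -1] : Fin 2 → ℝ) i * B ((![u, v] : Fin 2 → ℝ) i) ω)
      = fun ω => B u ω - B v ω := by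
    ext ω; simp [Fin.sum_univ_two]; ring
  rw [e] at hw
  rw [hw]
  congr 1
  have hm : Measurable (fun ω => B u ω - B v ω) := (hB.measurable u).sub (hB.measurable v)
  have h1 : ∫ ω, (B u ω - B v ω) ^ 2 ∂P = w := by
    have h2 : Var[fun x => x; gaussianReal 0 w] = w := variance_fun_id_gaussianReal
    rw [variance_of_integral_eq_zero (by fun_prop) (by simp)] at h2
    rw [← hw, integral_map hm.aemeasurable (by fun_prop)] at h2
    exact h2
  have hi : ∀ u v, Integrable (fun ω => B u ω * B v ω) P := fun u v => (hL u).integrable_mul (hL v)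
  have h3 : ∫ ω, (B u ω - B v ω) ^ 2 ∂P = |u - v| ^ (2 * H) := by
    have : ∀ ω, (B u ω - B v ω) ^ 2 = B u ω * B u ω - 2 * (B u ω * B v ω) + B v ω * B v ω := by
      intro ω; ring
    simp_rw [this]
    have hs : Integrable (fun ω => B u ω * B u ω - 2 * (B u ω * B v ω)) P :=
      (hi u u).sub ((hi u v).const_mul 2)
    rw [integral_add hs (hi v v),
      integral_sub (hi u u) ((hi u v).const_mul 2), integral_const_mul,
      hB.cov u u hu hu, hB.cov u v hu hv, hB.cov v v hv hv]
    have h0 : (2 * H) ≠ 0 := by have := hH.1; intro h; linarith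
    simp [Real.zero_rpow h0]
    rw [abs_sub_comm v u]; ring
  rw [← h3, h1]; simp

lemma fbm_tail {Ω : Type*} [MeasurableSpace Ω] {P : Measure Ω}
    [IsProbabilityMeasure P] {H : ℝ} {B : ℝ → Ω → ℝ}
    (hH : H ∈ Set.Ico (1/2 : ℝ) 1) (hB : IsFBM P H B) (u v : ℝ) (hu : 0 ≤ u) (hv : 0 ≤ v)
    (c : ℝ) (hc : 0 < c) (huv : |u - v| ^ (2 * H) ≤ c) (y : ℝ) (hy : 0 ≤ y) :
    P {ω | y ≤ B u ω - B v ω} ≤ ENNReal.ofReal (Real.exp (-y ^ 2 / (2 * c))) := by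
  have hm : Measurable (fun ω => B u ω - B v ω) := (hB.measurable u).sub (hB.measurable v)
  have hg := fbm_var hH hB u v hu hv
  have hs : HasSubgaussianMGF (fun ω => B u ω - B v ω) (Real.toNNReal c) P := by
    constructor
    · intro s
      have h := integrable_exp_mul_gaussianReal (μ := 0)
        (v := Real.toNNReal (|u - v| ^ (2 * H))) s
      rw [← hg] at h
      exact (integrable_map_measure (by fun_prop) hm.aemeasurable).1 h
    · intro s
      rw [mgf_gaussianReal hg]
      apply Real.exp_le_exp.2
      rw [Real.coe_toNNReal _ (by positivity), Real.coe_toNNReal _ hc.le]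
      have := mul_le_mul_of_nonneg_right huv (sq_nonneg s)
      linarith
  have := hs.measure_ge_le hy
  rw [Real.coe_toNNReal _ hc.le] at this
  rw [← ENNReal.ofReal_toReal (measure_ne_top P _)]
  exact ENNReal.ofReal_le_ofReal this

lemma fbm_lower {Ω : Type*} [MeasurableSpace Ω] {P : Measure Ω}
    [IsProbabilityMeasure P] {H : ℝ} {B : ℝ → Ω → ℝ}
    (hH : H ∈ Set.Ico (1/2 : ℝ) 1) (hB : IsFBM P H B) (t : ℝ) (ht : 0 < t) (y : ℝ) (hy : 0 ≤ y) :
    (√(2 * π * t ^ (2 * H)))⁻¹ * Real.exp (-(y + 1) ^ 2 / (2 * t ^ (2 * H)))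
      ≤ (P {ω | y < B 0 ω - B t ω}).toReal := by
  have hm : Measurable (fun ω => B 0 ω - B t ω) := (hB.measurable 0).sub (hB.measurable t)
  have hg := fbm_var hH hB 0 t le_rfl ht.le
  have hD : 0 < t ^ (2 * H) := by positivity
  rw [zero_sub, abs_neg, abs_of_pos ht] at hg
  have e : P {ω | y < B 0 ω - B t ω} = gaussianReal 0 (Real.toNNReal (t ^ (2 * H))) (Ioi y) := by
    rw [← hg, Measure.map_apply hm measurableSet_Ioi]; rfl
  rw [e]
  have hv : Real.toNNReal (t ^ (2 * H)) ≠ 0 := by simpa using hD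
  apply (ENNReal.ofReal_le_iff_le_toReal (measure_ne_top _ _)).1
  refine le_trans ?_ (measure_mono (s := Ioc y (y + 1)) (fun z hz => hz.1))
  rw [gaussianReal_apply _ hv]
  calc _ = ∫⁻ x in Ioc y (y + 1), ENNReal.ofReal
        ((√(2 * π * t ^ (2 * H)))⁻¹ * Real.exp (-(y + 1) ^ 2 / (2 * t ^ (2 * H)))) := by
        simp
    _ ≤ _ := by
        apply setLIntegral_mono (by fun_prop)
        intro x hx
        rw [gaussianPDF_def]
        apply ENNReal.ofReal_le_ofReal
        rw [gaussianPDFReal_def]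
        simp only [Real.coe_toNNReal _ hD.le, sub_zero]
        gcongr
        · have := hx.1; linarith
        · exact hx.2

lemma grid_mem (t : ℝ) (ht : 0 < t) (N k : ℕ) (hk : k ≤ 2 ^ N) :
    0 ≤ t * (k : ℝ) / 2 ^ N ∧ t * (k : ℝ) / 2 ^ N ≤ t := by
  refine ⟨by positivity, ?_⟩
  rw [div_le_iff₀ (by positivity)]
  have : (k : ℝ) ≤ 2 ^ N := by exact_mod_cast hk
  nlinarith

lemma fbm_upper {Ω : Type*} [MeasurableSpace Ω] {P : Measure Ω}
    [IsProbabilityMeasure P] {H : ℝ} {B : ℝ → Ω → ℝ}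
    (hH : H ∈ Set.Ico (1/2 : ℝ) 1) (hB : IsFBM P H B)
    (μ σ t : ℝ) (hσ : 0 < σ) (ht : 0 < t) (ε : ℝ) (hε : 0 < ε) (hε1 : ε < 1 / 3) :
    ∃ C : ℝ, 0 < C ∧ ∀ᶠ x : ℝ in atTop,
      (P {ω | x < sSup {r | ∃ u v : ℝ, 0 ≤ u ∧ u ≤ v ∧ v ≤ t ∧
            r = (μ * u + σ * B u ω) - (μ * v + σ * B v ω)}}).toReal
        ≤ C * Real.exp (-((1 - 3 * ε) * x) ^ 2 / (2 * σ ^ 2 * t ^ (2 * H))) := by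
  have hH1 := hH.1
  set D := t ^ (2 * H) with hD
  have hDpos : 0 < D := by positivity
  obtain ⟨N, hN⟩ : ∃ N : ℕ, 8 / ε ^ 2 < 2 ^ N := pow_unbounded_of_one_lt _ (by norm_num)
  rw [div_lt_iff₀ (by positivity)] at hN
  refine ⟨(2 ^ N + 1) * (2 ^ N + 1) + 2 ^ (N + 3), by positivity, ?_⟩
  have hlim : Tendsto (fun x : ℝ => Real.exp (-(x ^ 2 / (16 * σ ^ 2 * D)))) atTop (nhds 0) := by
    apply Real.tendsto_exp_neg_atTop_nhds_zero.comp
    exact (tendsto_pow_atTop (by norm_num)).atTop_div_const (by positivity)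
  filter_upwards [eventually_gt_atTop 0, eventually_ge_atTop (|μ| * t / ε),
    hlim.eventually (gt_mem_nhds (by norm_num : (0:ℝ) < 1 / 4))] with x hx hxμ hxr
  rw [div_le_iff₀ hε] at hxμ
  set r := Real.exp (-(x ^ 2 / (16 * σ ^ 2 * D))) with hr
  set y := (1 - 3 * ε) * x / σ with hy
  have hy0 : 0 ≤ y := by
    have : 0 ≤ 1 - 3 * ε := by linarith
    positivity
  set a := ε * x / σ with ha
  have ha0 : 0 ≤ a := by positivity
  set G : ℕ → ℕ → Set Ω := fun k l =>
    {ω | y ≤ B (t * (k : ℝ) / 2 ^ N) ω - B (t * (l : ℝ) / 2 ^ N) ω} with hG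
  set F : ℕ → ℕ → Set Ω := fun j k =>
    {ω | a / 4 * (3 / 4) ^ j ≤ B (t * ((k + 1 : ℕ) : ℝ) / 2 ^ (N + j + 1)) ω
        - B (t * (k : ℝ) / 2 ^ (N + j + 1)) ω} ∪
    {ω | a / 4 * (3 / 4) ^ j ≤ B (t * (k : ℝ) / 2 ^ (N + j + 1)) ω
        - B (t * ((k + 1 : ℕ) : ℝ) / 2 ^ (N + j + 1)) ω} with hF
  have hsub : {ω | x < sSup {r | ∃ u v : ℝ, 0 ≤ u ∧ u ≤ v ∧ v ≤ t ∧
            r = (μ * u + σ * B u ω) - (μ * v + σ * B v ω)}} ⊆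
      (⋃ k ∈ Finset.range (2 ^ N + 1), ⋃ l ∈ Finset.range (2 ^ N + 1), G k l) ∪
      ⋃ j : ℕ, ⋃ k ∈ Finset.range (2 ^ (N + j + 1)), F j k := by
    intro ω hω
    by_contra hcon
    simp only [mem_union, mem_iUnion, Finset.mem_range, not_or, not_exists, hG, hF,
      mem_ofPred_eq, not_le] at hcon
    obtain ⟨h1, h2⟩ := hcon
    have hchain := chain_aux (fun s => B s ω) (hB.cont ω) t ht N a ha0 (by
      intro j k hk
      have := h2 j k hk
      rw [abs_le]
      constructor <;> linarith [this.1, this.2])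
    have hω' : x < sSup _ := hω
    refine absurd hω' (not_lt.2 ?_)
    apply Real.sSup_le _ hx.le
    rintro _ ⟨u, v, hu, huv, hvt, rfl⟩
    obtain ⟨k, hk, hk'⟩ := hchain u hu (huv.trans hvt)
    obtain ⟨l, hl, hl'⟩ := hchain v (hu.trans huv) hvt
    have h3 := h1 k (by omega) l (by omega)
    rw [abs_le] at hk' hl'
    have h4 : B u ω - B v ω ≤ y + 2 * a := by linarith [hk'.2, hl'.1]
    have h5 : σ * (B u ω - B v ω) ≤ (1 - 3 * ε) * x + 2 * (ε * x) := by
      have := mul_le_mul_of_nonneg_left h4 hσ.le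
      have e : σ * (y + 2 * a) = (1 - 3 * ε) * x + 2 * (ε * x) := by
        simp only [hy, ha]; field_simp
      linarith
    have h6 : μ * (u - v) ≤ |μ| * t := by
      refine (le_abs_self _).trans ?_
      rw [abs_mul]
      gcongr
      rw [abs_le]; constructor <;> linarith
    linarith
  set E := Real.exp (-((1 - 3 * ε) * x) ^ 2 / (2 * σ ^ 2 * D)) with hE
  set E1 := Real.exp (-(x ^ 2 / (2 * σ ^ 2 * D))) with hE1
  have hE1E : E1 ≤ E := by
    apply Real.exp_le_exp.2
    rw [← neg_div]
    have h1 : 0 ≤ (1 - 3 * ε) * x := mul_nonneg (by linarith) hx.le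
    gcongr
    nlinarith [mul_pos hε hx]
  have hGm : ∀ k ∈ Finset.range (2 ^ N + 1), ∀ l ∈ Finset.range (2 ^ N + 1),
      P (G k l) ≤ ENNReal.ofReal E := by
    intro k hk l hl
    rw [Finset.mem_range] at hk hl
    obtain ⟨k1, k2⟩ := grid_mem t ht N k (by omega)
    obtain ⟨l1, l2⟩ := grid_mem t ht N l (by omega)
    refine (fbm_tail hH hB _ _ k1 l1 D hDpos ?_ y hy0).trans (le_of_eq ?_)
    · apply Real.rpow_le_rpow (abs_nonneg _) _ (by linarith)
      rw [abs_le]; constructor <;> linarith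
    · congr 2
      simp only [hy]; field_simp
  have hFm : ∀ j : ℕ, ∀ k ∈ Finset.range (2 ^ (N + j + 1)),
      P (F j k) ≤ ENNReal.ofReal (2 * (E1 * r ^ j)) := by
    intro j k hk
    rw [Finset.mem_range] at hk
    obtain ⟨k1, k2⟩ := grid_mem t ht (N + j + 1) k (by omega)
    obtain ⟨l1, l2⟩ := grid_mem t ht (N + j + 1) (k + 1) (by omega)
    have hp : (0:ℝ) < 2 ^ (N + j + 1) := by positivity
    have hd : |t * ((k + 1 : ℕ) : ℝ) / 2 ^ (N + j + 1) - t * (k : ℝ) / 2 ^ (N + j + 1)| ^ (2 * H)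
        ≤ D / 2 ^ (N + j + 1) := by
      have e1 : t * ((k + 1 : ℕ) : ℝ) / 2 ^ (N + j + 1) - t * (k : ℝ) / 2 ^ (N + j + 1)
          = t / 2 ^ (N + j + 1) := by
        push_cast; ring
      rw [e1, abs_of_pos (by positivity), Real.div_rpow ht.le hp.le]
      apply div_le_div_of_nonneg_left hDpos.le hp
      have h1 : (1:ℝ) ≤ 2 ^ (N + j + 1) := one_le_pow₀ (by norm_num)
      calc (2:ℝ) ^ (N + j + 1) = ((2:ℝ) ^ (N + j + 1)) ^ (1:ℝ) := (Real.rpow_one _).symm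
        _ ≤ _ := Real.rpow_le_rpow_of_exponent_le h1 (by linarith)
    have hth : 0 ≤ a / 4 * (3 / 4 : ℝ) ^ j := by positivity
    have hc : 0 < D / 2 ^ (N + j + 1) := by positivity
    have hexp : Real.exp (-(a / 4 * (3 / 4) ^ j) ^ 2 / (2 * (D / 2 ^ (N + j + 1)))) ≤ E1 * r ^ j := by
      rw [hr, ← Real.exp_nat_mul, hE1, ← Real.exp_add]
      apply Real.exp_le_exp.2
      have hb : 1 + (j:ℝ) * (1 / 8) ≤ (9 / 8) ^ j := by
        have := one_add_mul_le_pow (a := (1 / 8 : ℝ)) (by norm_num) j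
        norm_num at this ⊢
        exact this
      have e2 : (a / 4 * (3 / 4) ^ j) ^ 2 / (2 * (D / 2 ^ (N + j + 1)))
          = (2 ^ N * ε ^ 2 / 8) * (9 / 8) ^ j * (x ^ 2 / (2 * σ ^ 2 * D)) := by
        have e3 : ((9:ℝ) / 8) ^ j = ((3 / 4) ^ j) ^ 2 * 2 ^ j := by
          rw [← pow_mul, mul_comm j 2, pow_mul, ← mul_pow]; norm_num
        rw [e3, ha, pow_succ (2:ℝ) (N + j), pow_add]
        field_simp
        ring
      rw [neg_div, e2]
      have hz : 0 ≤ x ^ 2 / (2 * σ ^ 2 * D) := by positivity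
      have e4 : x ^ 2 / (16 * σ ^ 2 * D) = x ^ 2 / (2 * σ ^ 2 * D) / 8 := by
        field_simp; norm_num
      rw [e4]
      have h9 : (9 / 8 : ℝ) ^ j ≤ (2 ^ N * ε ^ 2 / 8) * (9 / 8) ^ j := by
        have : (0:ℝ) < (9 / 8) ^ j := by positivity
        nlinarith
      have := mul_le_mul_of_nonneg_right (hb.trans h9) hz
      linarith
    have t1 := fbm_tail hH hB _ _ l1 k1 _ hc hd _ hth
    rw [abs_sub_comm] at hd
    have t2 := fbm_tail hH hB _ _ k1 l1 _ hc hd _ hth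
    refine (measure_union_le _ _).trans ((add_le_add t1 t2).trans ?_)
    rw [← ENNReal.ofReal_add (by positivity) (by positivity)]
    apply ENNReal.ofReal_le_ofReal
    linarith
  have hr0 : 0 < r := Real.exp_pos _
  have hE1p : 0 < E1 := Real.exp_pos _
  have hEp : 0 < E := Real.exp_pos _
  have hA : P (⋃ k ∈ Finset.range (2 ^ N + 1), ⋃ l ∈ Finset.range (2 ^ N + 1), G k l)
      ≤ ENNReal.ofReal ((2 ^ N + 1) * (2 ^ N + 1) * E) := by
    calc _ ≤ ∑ k ∈ Finset.range (2 ^ N + 1), P (⋃ l ∈ Finset.range (2 ^ N + 1), G k l) :=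
          measure_biUnion_finset_le _ _
      _ ≤ ∑ k ∈ Finset.range (2 ^ N + 1), ∑ l ∈ Finset.range (2 ^ N + 1), P (G k l) :=
          Finset.sum_le_sum fun k _ => measure_biUnion_finset_le _ _
      _ ≤ ∑ k ∈ Finset.range (2 ^ N + 1), ∑ l ∈ Finset.range (2 ^ N + 1), ENNReal.ofReal E :=
          Finset.sum_le_sum fun k hk => Finset.sum_le_sum fun l hl => hGm k hk l hl
      _ = _ := by
          rw [ENNReal.ofReal_mul (by positivity), ENNReal.ofReal_mul (by positivity)]
          simp only [Finset.sum_const, Finset.card_range, nsmul_eq_mul, ← mul_assoc]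
          have : ENNReal.ofReal (2 ^ N + 1) = ((2 ^ N + 1 : ℕ) : ENNReal) := by
            rw [← ENNReal.ofReal_natCast]; push_cast; rfl
          rw [this]
  have hBd : P (⋃ j : ℕ, ⋃ k ∈ Finset.range (2 ^ (N + j + 1)), F j k)
      ≤ ENNReal.ofReal (2 ^ (N + 3) * E1) := by
    have hg : HasSum (fun j : ℕ => 2 ^ (N + 2) * E1 * (1 / 2 : ℝ) ^ j) (2 ^ (N + 3) * E1) := by
      have := hasSum_geometric_two.mul_left (2 ^ (N + 2) * E1)
      have e : (2:ℝ) ^ (N + 3) * E1 = 2 ^ (N + 2) * E1 * 2 := by ring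
      rw [e]; exact this
    calc _ ≤ ∑' j : ℕ, P (⋃ k ∈ Finset.range (2 ^ (N + j + 1)), F j k) := measure_iUnion_le _
      _ ≤ ∑' j : ℕ, ENNReal.ofReal (2 ^ (N + 2) * E1 * (1 / 2 : ℝ) ^ j) := by
          refine ENNReal.tsum_le_tsum fun j => ?_
          calc _ ≤ ∑ k ∈ Finset.range (2 ^ (N + j + 1)), P (F j k) :=
                measure_biUnion_finset_le _ _
            _ ≤ ∑ k ∈ Finset.range (2 ^ (N + j + 1)), ENNReal.ofReal (2 * (E1 * r ^ j)) :=
                Finset.sum_le_sum fun k hk => hFm j k hk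
            _ = ENNReal.ofReal (2 ^ (N + j + 1) * (2 * (E1 * r ^ j))) := by
                rw [ENNReal.ofReal_mul (p := 2 ^ (N + j + 1)) (by positivity)]
                simp only [Finset.sum_const, Finset.card_range, nsmul_eq_mul]
                have : ENNReal.ofReal (2 ^ (N + j + 1)) = ((2 ^ (N + j + 1) : ℕ) : ENNReal) := by
                  rw [← ENNReal.ofReal_natCast]; push_cast; rfl
                rw [this]
            _ ≤ _ := by
                apply ENNReal.ofReal_le_ofReal
                have h1 : r ^ j ≤ (1 / 4) ^ j := pow_le_pow_left₀ hr0.le hxr.le j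
                have h2 : (2:ℝ) ^ j * (1 / 4) ^ j = (1 / 2) ^ j := by
                  rw [← mul_pow]; norm_num
                calc (2:ℝ) ^ (N + j + 1) * (2 * (E1 * r ^ j))
                    ≤ 2 ^ (N + j + 1) * (2 * (E1 * (1 / 4) ^ j)) := by gcongr
                  _ = _ := by rw [← h2]; ring
      _ = _ := by
          rw [← ENNReal.ofReal_tsum_of_nonneg (fun j => by positivity) hg.summable, hg.tsum_eq]
  apply ENNReal.toReal_le_of_le_ofReal (by positivity)
  refine (measure_mono hsub).trans ((measure_union_le _ _).trans ((add_le_add hA hBd).trans ?_))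
  rw [← ENNReal.ofReal_add (by positivity) (by positivity)]
  apply ENNReal.ofReal_le_ofReal
  have : (2:ℝ) ^ (N + 3) * E1 ≤ 2 ^ (N + 3) * E := by gcongr
  linarith

theorem drifted_maxLoss_log_tail_asymptotic {Ω : Type*} [MeasurableSpace Ω] (P : Measure Ω)
    [IsProbabilityMeasure P] (H : ℝ) (B : ℝ → Ω → ℝ)
    (hH : H ∈ Set.Ico (1/2 : ℝ) 1) (hB : IsFBM P H B)
    (μ σ t : ℝ) (hσ : 0 < σ) (ht : 0 < t) :
    Tendsto (fun x : ℝ => (1 / x ^ 2) *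
        Real.log ((P {ω | x < sSup {r | ∃ u v : ℝ, 0 ≤ u ∧ u ≤ v ∧ v ≤ t ∧
            r = (μ * u + σ * B u ω) - (μ * v + σ * B v ω)}}).toReal))
      atTop (nhds (-(1 / (2 * σ ^ 2 * t ^ (2 * H))))) := by
  have hH1 := hH.1
  set D := t ^ (2 * H) with hD
  have hDpos : 0 < D := by positivity
  set p : ℝ → ℝ := fun x => (P {ω | x < sSup {r | ∃ u v : ℝ, 0 ≤ u ∧ u ≤ v ∧ v ≤ t ∧
            r = (μ * u + σ * B u ω) - (μ * v + σ * B v ω)}}).toReal with hp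
  set K := (√(2 * π * D))⁻¹ with hK
  have hKpos : 0 < K := by positivity
  have hlow : ∀ᶠ x : ℝ in atTop,
      K * Real.exp (-((x + μ * t) / σ + 1) ^ 2 / (2 * D)) ≤ p x := by
    filter_upwards [eventually_ge_atTop (-(μ * t))] with x hx
    have hy : 0 ≤ (x + μ * t) / σ := div_nonneg (by linarith) hσ.le
    refine (fbm_lower hH hB t ht _ hy).trans ?_
    apply ENNReal.toReal_mono (measure_ne_top _ _)
    apply measure_mono
    intro ω hω
    have hω' : (x + μ * t) / σ < B 0 ω - B t ω := hω
    rw [div_lt_iff₀ hσ] at hω'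
    refine lt_of_lt_of_le (b := (μ * 0 + σ * B 0 ω) - (μ * t + σ * B t ω)) (by linarith) ?_
    apply le_csSup
    · have hc : Continuous fun q : ℝ × ℝ => (μ * q.1 + σ * B q.1 ω) - (μ * q.2 + σ * B q.2 ω) := by
        have := hB.cont ω
        have h1 : Continuous fun q : ℝ × ℝ => B q.1 ω := this.comp continuous_fst
        have h2 : Continuous fun q : ℝ × ℝ => B q.2 ω := this.comp continuous_snd
        fun_prop
      have hb := ((isCompact_Icc (a := (0:ℝ)) (b := t)).prod
        (isCompact_Icc (a := (0:ℝ)) (b := t))).bddAbove_image hc.continuousOn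
      refine hb.mono ?_
      rintro _ ⟨u, v, hu, huv, hv, rfl⟩
      exact ⟨(u, v), ⟨⟨hu, huv.trans hv⟩, ⟨hu.trans huv, hv⟩⟩, rfl⟩
    · exact ⟨0, t, le_rfl, ht.le, le_rfl, rfl⟩
  have hinv : Tendsto (fun x : ℝ => x⁻¹) atTop (nhds 0) := tendsto_inv_atTop_zero
  rw [tendsto_order]
  constructor
  · intro l hl
    have hT : Tendsto (fun x : ℝ => Real.log K * (x⁻¹) ^ 2
        - ((1 + μ * t * x⁻¹) / σ + x⁻¹) ^ 2 / (2 * D)) atTop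
        (nhds (-(1 / (2 * σ ^ 2 * D)))) := by
      have : Tendsto (fun x : ℝ => Real.log K * (x⁻¹) ^ 2
        - ((1 + μ * t * x⁻¹) / σ + x⁻¹) ^ 2 / (2 * D)) atTop
        (nhds (Real.log K * 0 ^ 2 - ((1 + μ * t * 0) / σ + 0) ^ 2 / (2 * D))) :=
        ((hinv.pow 2).const_mul _).sub
          ((((((hinv.const_mul _).const_add _).div_const _).add hinv).pow 2).div_const _)
      convert this using 2
      field_simp; simp
    filter_upwards [hT.eventually (lt_mem_nhds hl), hlow, eventually_gt_atTop 0] with x h1 h2 hx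
    refine h1.trans_le ?_
    have h3 := Real.log_le_log (by positivity) h2
    rw [Real.log_mul hKpos.ne' (Real.exp_pos _).ne', Real.log_exp] at h3
    calc _ = (1 / x ^ 2) * (Real.log K + -((x + μ * t) / σ + 1) ^ 2 / (2 * D)) := by
          field_simp; ring
      _ ≤ _ := by gcongr
  · intro l hl
    have hc : Tendsto (fun ε : ℝ => -((1 - 3 * ε) ^ 2 / (2 * σ ^ 2 * D))) (nhdsWithin 0 (Ioi 0))
        (nhds (-(1 / (2 * σ ^ 2 * D)))) := by
      have : Continuous (fun ε : ℝ => -((1 - 3 * ε) ^ 2 / (2 * σ ^ 2 * D))) := by fun_prop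
      have h := (this.tendsto 0).mono_left (nhdsWithin_le_nhds (s := Ioi 0))
      simpa using h
    obtain ⟨ε, hε1, hε0, hε2⟩ := ((hc.eventually (gt_mem_nhds hl)).and
      (Ioo_mem_nhdsGT (by norm_num : (0:ℝ) < 1 / 3))).exists
    obtain ⟨C, hC, hup⟩ := fbm_upper hH hB μ σ t hσ ht ε hε0 hε2
    have hT : Tendsto (fun x : ℝ => Real.log C * (x⁻¹) ^ 2
        + -((1 - 3 * ε) ^ 2 / (2 * σ ^ 2 * D))) atTop
        (nhds (-((1 - 3 * ε) ^ 2 / (2 * σ ^ 2 * D)))) := by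
      simpa using ((hinv.pow 2).const_mul (Real.log C)).add_const
        (-((1 - 3 * ε) ^ 2 / (2 * σ ^ 2 * D)))
    filter_upwards [hT.eventually (gt_mem_nhds hε1), hlow, hup, eventually_gt_atTop 0]
      with x h1 h2 h4 hx
    refine lt_of_le_of_lt ?_ h1
    have hpp : 0 < p x := lt_of_lt_of_le (by positivity) h2
    have h3 := Real.log_le_log hpp h4
    rw [Real.log_mul hC.ne' (Real.exp_pos _).ne', Real.log_exp] at h3
    calc _ ≤ (1 / x ^ 2) * (Real.log C + -((1 - 3 * ε) * x) ^ 2 / (2 * σ ^ 2 * D)) := by gcongr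
      _ = _ := by field_simp
end
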